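/- arXiv:2406.05890 — 2 statements merged into one kernel-verified Lean document; each statement's English description precedes it below -/
import Mathlib

section
/- Let p ≥ 3 be a prime and let (a_n)_{n≥0} be given by a_n = c_1·λ_1^n + c_2·λ_2^n with a_n ∈ ℚ_p for all n, where c_1, c_2, λ_1, λ_2 are nonzero elements of ℚ_p or of the unramified quadratic extension ℚ_p(√d). Assume |λ_1|_p = |λ_2|_p > 0 and that λ_2/λ_1 is not a root of unity. Let l be the order of λ_2/λ_1 modulo p and k = ν_p((λ_2/λ_1)^l − 1). Suppose −c_1/c_2 belongs to the closure of {(λ_2/λ_1)^n : n ∈ ℕ}, l ≥ 2, and s ∈ {0,1,…,l−1} satisfies (λ_2/λ_1)^s ≡ −c_1/c_2 (mod p^k). Then the Kepler set of (a_n) is the disjoint union K((a_n)) = ⨆_{i=0, i≠s}^{l−1} ( a_{i+1}/a_i + p^{ν_p(λ_2−λ_1)+k}·ℤ_p ) ⊔ {x ∈ ℚ_p : ν_p(x) < ν_p(λ_2) + 1 − k}. -/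
/-- The Kepler set of a sequence `a` in `ℚ_[p]`: the closure of the set of
consecutive ratios `a (n+1) / a n` over indices `n` with `a n ≠ 0`. -/
def keplerSet (p : ℕ) [Fact p.Prime] (a : ℕ → ℚ_[p]) : Set ℚ_[p] :=
  closure {x : ℚ_[p] | ∃ n : ℕ, a n ≠ 0 ∧ x = a (n + 1) / a n}

/-! Put `r = λ₂ / λ₁`, `t = -c₁ / c₂` and `ρ = ‖r ^ l - 1‖`. Then `a n = c₂ λ₁ⁿ (rⁿ - t)`, so the
ratio `a (n + 1) / a n` is the value at `z = rⁿ` of the Möbius map `z ↦ λ₁ (r z - t) / (z - t)`,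
whose determinant `λ₁ t (1 - r)` has norm `‖λ₁‖`. Lifting the exponent gives
`‖r ^ (i + l m) - r ^ (i + l n)‖ = ρ ‖m - n‖`, while powers of `r` with exponents incongruent modulo
`l` are at distance `1`. On each class `i ≠ σ` modulo `l` the denominators are thus units, the
Möbius map scales distances by `‖λ₁‖`, and the ratios fill a ball of radius `‖λ₁‖ ρ` because they
are a scaled isometric image of `ℕ`. On the class of `σ`, where `rⁿ` is close to the pole `t`, the
same argument applies to the inverse ratios, which fill the ball of radius `ρ / ‖λ₁‖` around `0`;
inverting gives the complement of a ball. -/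

section Ultrametric

variable {E : Type*} [SeminormedAddCommGroup E] [IsUltrametricDist E] {x y : E}

theorem norm_sub_le_max (x y : E) : ‖x - y‖ ≤ max ‖x‖ ‖y‖ := by
  simpa [sub_eq_add_neg] using IsUltrametricDist.norm_add_le_max x (-y)

theorem norm_eq_of_norm_sub_lt_right (h : ‖x - y‖ < ‖y‖) : ‖x‖ = ‖y‖ := by
  rw [← norm_neg y]
  apply IsUltrametricDist.norm_eq_of_add_norm_lt_max
  rw [← sub_eq_add_neg, norm_neg]
  exact h.trans_le (le_max_right _ _)

end Ultrametric

theorem norm_natCast_eq_of_normedAlgebra (𝕜 A : Type*) [NormedField 𝕜] [SeminormedRing A]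
    [NormOneClass A] [NormedAlgebra 𝕜 A] (n : ℕ) : ‖(n : A)‖ = ‖(n : 𝕜)‖ := by
  rw [← norm_algebraMap' A (n : 𝕜), map_natCast]

section LiftingTheExponent

variable {K : Type*} [NormedField K] [IsUltrametricDist K] {u : K}

theorem norm_eq_one_of_norm_sub_one_lt_one (hu : ‖u - 1‖ < 1) : ‖u‖ = 1 := by
  simpa using norm_eq_of_norm_sub_lt_right (y := (1 : K)) (by simpa using hu)

theorem norm_geom_sum_le_one (hu : ‖u‖ ≤ 1) (n : ℕ) : ‖∑ i ∈ Finset.range n, u ^ i‖ ≤ 1 :=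
  IsUltrametricDist.norm_sum_le_of_forall_le_of_nonneg zero_le_one fun i _ => by
    rw [norm_pow]
    exact pow_le_one₀ (norm_nonneg u) hu

theorem norm_pow_sub_one_le (hu : ‖u‖ ≤ 1) (n : ℕ) : ‖u ^ n - 1‖ ≤ ‖u - 1‖ := by
  rw [← geom_sum_mul, norm_mul]
  exact mul_le_of_le_one_left (norm_nonneg _) (norm_geom_sum_le_one hu n)

theorem norm_geom_sum_sub_natCast_le (hu : ‖u‖ ≤ 1) (n : ℕ) :
    ‖(∑ i ∈ Finset.range n, u ^ i) - n‖ ≤ ‖u - 1‖ := by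
  have hsum : (∑ i ∈ Finset.range n, u ^ i) - n = ∑ i ∈ Finset.range n, (u ^ i - 1) := by
    simp [Finset.sum_sub_distrib]
  rw [hsum]
  exact IsUltrametricDist.norm_sum_le_of_forall_le_of_nonneg (norm_nonneg _)
    fun i _ => norm_pow_sub_one_le hu i

theorem norm_pow_sub_one_eq_of_norm_natCast_eq_one (hu : ‖u - 1‖ < 1) {n : ℕ}
    (hn : ‖(n : K)‖ = 1) : ‖u ^ n - 1‖ = ‖u - 1‖ := by
  have hsum : ‖∑ i ∈ Finset.range n, u ^ i‖ = 1 := by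
    rw [← hn]
    refine norm_eq_of_norm_sub_lt_right ?_
    rw [hn]
    exact (norm_geom_sum_sub_natCast_le (norm_eq_one_of_norm_sub_one_lt_one hu).le n).trans_lt hu
  rw [← geom_sum_mul, norm_mul, hsum, one_mul]

theorem exists_add_one_pow_prime_sub_one_eq {p : ℕ} (hp : p.Prime) {x : K} (hx : ‖x‖ ≤ 1) :
    ∃ v : K, (x + 1) ^ p - 1 = x ^ p + p * x * v ∧ ‖v - 1‖ ≤ ‖x‖ := by
  refine ⟨∑ k ∈ Finset.Ioo 0 p, x ^ (k - 1) * 1 ^ (p - k - 1) * ↑(p.choose k / p), ?_, ?_⟩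
  · rw [add_pow_prime_eq hp]
    ring
  have hone : 1 ∈ Finset.Ioo 0 p := Finset.mem_Ioo.2 ⟨one_pos, hp.one_lt⟩
  have hfirst : x ^ (1 - 1) * 1 ^ (p - 1 - 1) * ↑(p.choose 1 / p) = (1 : K) := by
    simp [Nat.div_self hp.pos]
  rw [← Finset.add_sum_erase _ _ hone, hfirst, add_sub_cancel_left]
  refine IsUltrametricDist.norm_sum_le_of_forall_le_of_nonneg (norm_nonneg x) fun k hk => ?_
  obtain ⟨hk1, hk0⟩ : k ≠ 1 ∧ 0 < k ∧ k < p := by simpa using hk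
  rw [one_pow, mul_one, norm_mul, norm_pow]
  calc ‖x‖ ^ (k - 1) * ‖((p.choose k / p : ℕ) : K)‖
      ≤ ‖x‖ ^ (k - 1) := mul_le_of_le_one_right (by positivity)
        (IsUltrametricDist.norm_natCast_le_one K _)
    _ ≤ ‖x‖ := pow_le_of_le_one (norm_nonneg x) hx (by omega)

theorem norm_pow_prime_sub_one_eq {p : ℕ} (hp : p.Prime) (hu : ‖u - 1‖ ^ (p - 1) < ‖(p : K)‖) :
    ‖u ^ p - 1‖ = ‖u - 1‖ * ‖(p : K)‖ := by
  obtain ⟨x, rfl⟩ : ∃ x, u = x + 1 := ⟨u - 1, by ring⟩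
  rw [add_sub_cancel_right] at hu ⊢
  have hp1 : p - 1 ≠ 0 := Nat.sub_ne_zero_of_lt hp.one_lt
  have hx1 : ‖x‖ < 1 := (pow_lt_one_iff_of_nonneg (norm_nonneg x) hp1).1
    (hu.trans_le (IsUltrametricDist.norm_natCast_le_one K p))
  obtain ⟨v, hv, hv1⟩ := exists_add_one_pow_prime_sub_one_eq hp hx1.le
  have hnorm : ‖(p : K) * x * v‖ = ‖x‖ * ‖(p : K)‖ := by
    rw [norm_mul, norm_mul, norm_eq_one_of_norm_sub_one_lt_one (hv1.trans_lt hx1), mul_one,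
      mul_comm]
  rcases eq_or_ne x 0 with rfl | hx0
  · simp
  rw [hv, ← hnorm]
  refine norm_eq_of_norm_sub_lt_right ?_
  rw [add_sub_cancel_right, hnorm, norm_pow, ← mul_pow_sub_one hp.ne_zero]
  exact mul_lt_mul_of_pos_left hu (norm_pos_iff.2 hx0)

variable {p : ℕ} [Fact p.Prime] [NormedAlgebra ℚ_[p] K]

-- The hypothesis says `‖u - 1‖ < p ^ (-1 / (p - 1))`: the disc of convergence of the exponential.
theorem norm_pow_sub_one_eq (hu : ‖u - 1‖ ^ (p - 1) < (p : ℝ)⁻¹) (n : ℕ) :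
    ‖u ^ n - 1‖ = ‖u - 1‖ * ‖(n : ℚ_[p])‖ := by
  have hpp : p.Prime := Fact.out
  have norm_sub_one_lt {w : K} (hw : ‖w - 1‖ ^ (p - 1) < (p : ℝ)⁻¹) : ‖w - 1‖ < 1 :=
    (pow_lt_one_iff_of_nonneg (norm_nonneg _) (Nat.sub_ne_zero_of_lt hpp.one_lt)).1
      (hw.trans (inv_lt_one_of_one_lt₀ (mod_cast hpp.one_lt)))
  induction n using Nat.recOnMul generalizing u with
  | zero => simp
  | one => simp
  | prime q hq =>
    rw [← norm_natCast_eq_of_normedAlgebra ℚ_[p] K]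
    rcases eq_or_ne p q with rfl | hpq
    · apply norm_pow_prime_sub_one_eq hq
      rwa [norm_natCast_eq_of_normedAlgebra ℚ_[p], Padic.norm_p]
    · have hq1 : ‖(q : K)‖ = 1 := by
        rw [norm_natCast_eq_of_normedAlgebra ℚ_[p], Padic.norm_natCast_eq_one_iff]
        exact (Nat.coprime_primes hpp hq).2 hpq
      rw [norm_pow_sub_one_eq_of_norm_natCast_eq_one (norm_sub_one_lt hu) hq1, hq1, mul_one]
  | mul m n ihm ihn =>
    have hum : ‖u ^ m - 1‖ ^ (p - 1) < (p : ℝ)⁻¹ := by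
      refine lt_of_le_of_lt ?_ hu
      gcongr
      exact norm_pow_sub_one_le (norm_eq_one_of_norm_sub_one_lt_one (norm_sub_one_lt hu)).le m
    rw [pow_mul, ihn hum, ihm hu, Nat.cast_mul, norm_mul, mul_assoc]

theorem norm_pow_sub_pow_eq (hu : ‖u‖ = 1) (hu1 : ‖u - 1‖ ^ (p - 1) < (p : ℝ)⁻¹) (m n : ℕ) :
    ‖u ^ m - u ^ n‖ = ‖u - 1‖ * ‖(m : ℚ_[p]) - n‖ := by
  wlog h : n ≤ m generalizing m n
  · rw [norm_sub_rev, this n m (by omega), norm_sub_rev (m : ℚ_[p])]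
  obtain ⟨c, rfl⟩ := Nat.exists_eq_add_of_le h
  rw [pow_add, ← mul_sub_one, norm_mul, norm_pow, hu, one_pow, one_mul, norm_pow_sub_one_eq hu1 c]
  simp

end LiftingTheExponent

section ResidueOrder

variable {K : Type*} [NormedField K]

/-- `l` is the multiplicative order of the image of `r` in the residue field, that is, of `r` modulo
the open unit ball. In an unramified extension of `ℚ_[p]` this is the order of `r` modulo `p`. -/
def IsResidueOrder (r : K) (l : ℕ) : Prop :=
  IsLeast {m : ℕ | 0 < m ∧ ‖r ^ m - 1‖ < 1} l

namespace IsResidueOrder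

variable [IsUltrametricDist K] {r : K} {l : ℕ}

theorem norm_eq_one (h : IsResidueOrder r l) : ‖r‖ = 1 := by
  have hpow := norm_eq_one_of_norm_sub_one_lt_one h.1.2
  rwa [norm_pow, pow_eq_one_iff_of_nonneg (norm_nonneg r) h.1.1.ne'] at hpow

theorem dvd_of_norm_pow_sub_one_lt_one (h : IsResidueOrder r l) {n : ℕ} (hn : ‖r ^ n - 1‖ < 1) :
    l ∣ n := by
  by_contra hdvd
  have hquot : ‖(r ^ l) ^ (n / l) - 1‖ < 1 :=
    (norm_pow_sub_one_le (norm_eq_one_of_norm_sub_one_lt_one h.1.2).le _).trans_lt h.1.2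
  have hfactor : r ^ n - 1 - ((r ^ l) ^ (n / l) - 1) = (r ^ l) ^ (n / l) * (r ^ (n % l) - 1) := by
    rw [mul_sub, ← pow_mul, ← pow_add, Nat.div_add_mod]
    ring
  have hrem : ‖r ^ (n % l) - 1‖ < 1 := by
    have hmax := (norm_sub_le_max _ _).trans_lt (max_lt hn hquot)
    rwa [hfactor, norm_mul, norm_pow, norm_pow, h.norm_eq_one, one_pow, one_pow, one_mul] at hmax
  exact (h.2 ⟨Nat.pos_of_ne_zero (mt Nat.dvd_of_mod_eq_zero hdvd), hrem⟩).not_gt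
    (Nat.mod_lt _ h.1.1)

theorem norm_pow_sub_pow_eq_one (h : IsResidueOrder r l) {m n : ℕ} (hmn : ¬ m ≡ n [MOD l]) :
    ‖r ^ m - r ^ n‖ = 1 := by
  wlog hle : n ≤ m generalizing m n
  · rw [norm_sub_rev, this (fun h' => hmn h'.symm) (by omega)]
  obtain ⟨c, rfl⟩ := Nat.exists_eq_add_of_le hle
  rw [pow_add, ← mul_sub_one, norm_mul, norm_pow, h.norm_eq_one, one_pow, one_mul]
  apply le_antisymm
  · simpa [h.norm_eq_one] using norm_sub_le_max (r ^ c) 1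
  · refine not_lt.1 fun hlt => hmn ?_
    simpa using (Nat.modEq_zero_iff_dvd.2 (h.dvd_of_norm_pow_sub_one_lt_one hlt)).add_left n

theorem norm_pow_add_mul_sub_pow_add_mul {p : ℕ} [Fact p.Prime] [NormedAlgebra ℚ_[p] K]
    (h : IsResidueOrder r l) (hsmall : ‖r ^ l - 1‖ ^ (p - 1) < (p : ℝ)⁻¹) (i m n : ℕ) :
    ‖r ^ (i + l * m) - r ^ (i + l * n)‖ = ‖r ^ l - 1‖ * ‖(m : ℚ_[p]) - n‖ := by
  rw [pow_add, pow_add, ← mul_sub, norm_mul, norm_pow, h.norm_eq_one, one_pow, one_mul, pow_mul,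
    pow_mul, norm_pow_sub_pow_eq (norm_eq_one_of_norm_sub_one_lt_one h.1.2) hsmall]

theorem norm_pow_sub_pow_le (h : IsResidueOrder r l) {m n : ℕ} (hmn : m ≡ n [MOD l]) :
    ‖r ^ m - r ^ n‖ ≤ ‖r ^ l - 1‖ := by
  wlog hle : n ≤ m generalizing m n
  · rw [norm_sub_rev]
    exact this hmn.symm (by omega)
  obtain ⟨c, hc⟩ := (Nat.modEq_iff_dvd' hle).1 hmn.symm
  obtain rfl : m = n + l * c := by omega
  rw [pow_add, ← mul_sub_one, norm_mul, norm_pow, h.norm_eq_one, one_pow, one_mul, pow_mul]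
  exact norm_pow_sub_one_le (norm_eq_one_of_norm_sub_one_lt_one h.1.2).le c

end IsResidueOrder

end ResidueOrder

section Density

variable {p : ℕ} [Fact p.Prime]

-- The values at `0, …, p ^ N - 1` are distinct modulo `p ^ N`, hence exhaust the residues.
theorem denseRange_padicInt_of_norm_sub_eq {f : ℕ → ℤ_[p]}
    (hf : ∀ m n, ‖f m - f n‖ = ‖(m : ℤ_[p]) - n‖) : DenseRange f := by
  rw [Metric.denseRange_iff]
  intro x ε hε
  obtain ⟨N, hN⟩ := PadicInt.exists_pow_neg_lt p hε
  have toZModPow_eq_iff (y z : ℤ_[p]) : PadicInt.toZModPow N y = PadicInt.toZModPow N z ↔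
      ‖y - z‖ ≤ (p : ℝ) ^ (-N : ℤ) := by
    rw [PadicInt.norm_le_pow_iff_mem_span_pow, ← PadicInt.ker_toZModPow, RingHom.mem_ker,
      map_sub, sub_eq_zero]
  have hinj : Function.Injective fun m : Fin (p ^ N) => PadicInt.toZModPow N (f m) := by
    intro m n hmn
    have hmod : PadicInt.toZModPow N (m : ℤ_[p]) = PadicInt.toZModPow N (n : ℤ_[p]) := by
      rw [toZModPow_eq_iff, ← hf]
      exact (toZModPow_eq_iff _ _).1 hmn
    rw [map_natCast, map_natCast, ZMod.natCast_eq_natCast_iff] at hmod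
    exact Fin.ext (hmod.eq_of_lt_of_lt m.2 n.2)
  obtain ⟨m, hm⟩ := (hinj.bijective_of_nat_card_le (by simp)).2 (PadicInt.toZModPow N x)
  refine ⟨m, ?_⟩
  rw [dist_eq_norm]
  exact ((toZModPow_eq_iff _ _).1 hm.symm).trans_lt hN

theorem closedBall_subset_closure_range_of_norm_sub_eq {f : ℕ → ℚ_[p]} {C : ℝ}
    (hf : ∀ m n, ‖f m - f n‖ = C * ‖(m : ℚ_[p]) - n‖) :
    Metric.closedBall (f 0) C ⊆ closure (Set.range f) := by
  intro x hx
  rw [mem_closedBall_iff_norm] at hx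
  obtain rfl : ‖f 1 - f 0‖ = C := by simpa using hf 1 0
  rcases eq_or_ne (f 1) (f 0) with h10 | h10
  · have hx0 : x = f 0 := by simpa [h10, sub_eq_zero] using hx
    exact subset_closure ⟨0, hx0.symm⟩
  set δ := f 1 - f 0
  have hδ : δ ≠ 0 := sub_ne_zero.2 h10
  have hδ' : ‖δ‖ ≠ 0 := norm_ne_zero_iff.2 hδ
  have hball (m : ℕ) : ‖(f m - f 0) / δ‖ ≤ 1 := by
    rw [norm_div, hf, mul_div_cancel_left₀ _ hδ']
    simpa using IsUltrametricDist.norm_natCast_le_one ℚ_[p] m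
  have hxball : ‖(x - f 0) / δ‖ ≤ 1 := by
    rw [norm_div]
    exact div_le_one_of_le₀ hx (norm_nonneg δ)
  let g : ℕ → ℤ_[p] := fun m => ⟨(f m - f 0) / δ, hball m⟩
  have hg : DenseRange g := denseRange_padicInt_of_norm_sub_eq fun m n => by
    rw [PadicInt.norm_def, PadicInt.norm_def, PadicInt.coe_sub, ← sub_div, sub_sub_sub_cancel_right,
      norm_div, hf, mul_div_cancel_left₀ _ hδ']
    simp
  let φ : ℤ_[p] → ℚ_[p] := fun y => f 0 + δ * y
  have hφ : Continuous φ := by fun_prop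
  have hφg : Set.MapsTo φ (Set.range g) (Set.range f) := by
    rintro _ ⟨m, rfl⟩
    exact ⟨m, by simp [φ, g, mul_div_cancel₀ _ hδ]⟩
  simpa [φ, mul_div_cancel₀ _ hδ] using map_mem_closure hφ (hg ⟨_, hxball⟩) hφg

end Density

theorem moebius_sub_moebius {K : Type*} [Field K] {α β γ δ z w : K} (hz : γ * z + δ ≠ 0)
    (hw : γ * w + δ ≠ 0) :
    (α * z + β) / (γ * z + δ) - (α * w + β) / (γ * w + δ) =
      (α * δ - β * γ) * (z - w) / ((γ * z + δ) * (γ * w + δ)) := by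
  rw [div_sub_div _ _ hz hw]
  ring

theorem norm_moebius_sub_moebius {K : Type*} [NormedField K] {α β γ δ z w : K}
    (hz : ‖γ * z + δ‖ = 1) (hw : ‖γ * w + δ‖ = 1) :
    ‖(α * z + β) / (γ * z + δ) - (α * w + β) / (γ * w + δ)‖ =
      ‖α * δ - β * γ‖ * ‖z - w‖ := by
  have hz0 : γ * z + δ ≠ 0 := norm_ne_zero_iff.1 (hz ▸ one_ne_zero)
  have hw0 : γ * w + δ ≠ 0 := norm_ne_zero_iff.1 (hw ▸ one_ne_zero)
  rw [moebius_sub_moebius hz0 hw0, norm_div, norm_mul, norm_mul, hz, hw, mul_one, div_one]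

theorem mem_closure_of_inv_mem_closure {G : Type*} [GroupWithZero G] [TopologicalSpace G]
    [T1Space G] [ContinuousInv₀ G] {s t : Set G} {x : G} (hx : x ≠ 0) (h : x⁻¹ ∈ closure s)
    (hst : ∀ y ∈ s, y ≠ 0 → y⁻¹ ∈ t) : x ∈ closure t := by
  have hne : x⁻¹ ∈ closure ({y | y ≠ 0} ∩ s) := isOpen_ne.inter_closure ⟨inv_ne_zero hx, h⟩
  have himage := mem_closure_image (continuousAt_inv₀ (inv_ne_zero hx)) hne
  rw [inv_inv] at himage
  refine closure_mono ?_ himage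
  rintro _ ⟨y, ⟨hy0, hy⟩, rfl⟩
  exact hst y hy hy0

theorem not_succ_modEq {l n σ : ℕ} (hl : 1 < l) (hn : n ≡ σ [MOD l]) :
    ¬ n + 1 ≡ σ [MOD l] := fun hn' => by
  have hone : 1 ≡ 0 [MOD l] := Nat.ModEq.add_left_cancel' n (hn'.trans hn.symm)
  rw [Nat.modEq_zero_iff_dvd, Nat.dvd_one] at hone
  exact hl.ne' hone

theorem not_modEq_of_mem_range_sdiff {i l σ : ℕ} (hσ : σ < l)
    (hi : i ∈ Finset.range l \ {σ}) : ¬ i ≡ σ [MOD l] := by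
  simp only [Finset.mem_sdiff, Finset.mem_range, Finset.mem_singleton] at hi
  exact fun hmod => hi.2 (hmod.eq_of_lt_of_lt hi.1 hσ)

section Kepler

variable {p : ℕ} [Fact p.Prime] {K : Type*} [NormedField K] [NormedAlgebra ℚ_[p] K]

/-- The sequence `a` in `ℚ_[p]` has the form `a n = c * lam ^ n * (r ^ n - t)`, that is
`c₁ λ₁ⁿ + c₂ λ₂ⁿ` with `c = c₂`, `lam = λ₁`, `r = λ₂ / λ₁` and `t = -c₁ / c₂`, and its zero `t` is
approximated by the powers of `r` with exponents congruent to `σ` modulo the residue order `l`.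
The field `norm_pow_lt` puts `r ^ l - 1` in the disc of convergence of the exponential, where
lifting the exponent is exact. -/
structure IsResonant (a : ℕ → ℚ_[p]) (c lam r t : K) (l σ : ℕ) : Prop where
  algebraMap_eq (n : ℕ) : algebraMap ℚ_[p] K (a n) = c * lam ^ n * (r ^ n - t)
  coeff_ne_zero : c ≠ 0
  root_ne_zero : lam ≠ 0
  isResidueOrder : IsResidueOrder r l
  one_lt : 1 < l
  pow_ne_one : r ^ l ≠ 1
  norm_pow_lt : ‖r ^ l - 1‖ ^ (p - 1) < (p : ℝ)⁻¹
  index_lt : σ < l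
  norm_sub_le : ‖r ^ σ - t‖ ≤ ‖r ^ l - 1‖

namespace IsResonant

variable {a : ℕ → ℚ_[p]} {c lam r t : K} {l σ : ℕ}

theorem algebraMap_ratio (h : IsResonant a c lam r t l σ) (n : ℕ) :
    algebraMap ℚ_[p] K (a (n + 1) / a n) = lam * ((r * r ^ n + -t) / (1 * r ^ n + -t)) := by
  have hscale := mul_ne_zero h.coeff_ne_zero (pow_ne_zero n h.root_ne_zero)
  have hnum : c * lam ^ (n + 1) * (r ^ (n + 1) - t) = c * lam ^ n * (lam * (r * r ^ n + -t)) := by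
    ring
  rw [map_div₀, h.algebraMap_eq, h.algebraMap_eq, hnum, mul_div_mul_left _ _ hscale, mul_div_assoc,
    one_mul, ← sub_eq_add_neg (r ^ n)]

theorem algebraMap_inv_ratio (h : IsResonant a c lam r t l σ) (n : ℕ) :
    algebraMap ℚ_[p] K (a n / a (n + 1)) = lam⁻¹ * ((1 * r ^ n + -t) / (r * r ^ n + -t)) := by
  rw [← inv_div (a (n + 1)), map_inv₀, h.algebraMap_ratio, mul_inv, inv_div]

theorem norm_mul_lt (h : IsResonant a c lam r t l σ) : ‖lam‖ * ‖r ^ l - 1‖ < ‖lam‖ :=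
  mul_lt_of_lt_one_right (norm_pos_iff.2 h.root_ne_zero) h.isResidueOrder.1.2

theorem norm_lt_div (h : IsResonant a c lam r t l σ) : ‖lam‖ < ‖lam‖ / ‖r ^ l - 1‖ :=
  (lt_div_iff₀ (norm_sub_pos_iff.2 h.pow_ne_one)).2 h.norm_mul_lt

theorem norm_inv_le_iff (h : IsResonant a c lam r t l σ) {x : ℚ_[p]} (hx : x ≠ 0) :
    ‖x⁻¹‖ ≤ ‖lam‖⁻¹ * ‖r ^ l - 1‖ ↔ ‖lam‖ / ‖r ^ l - 1‖ ≤ ‖x‖ := by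
  have hlam : 0 < ‖lam‖ := norm_pos_iff.2 h.root_ne_zero
  have hρ : 0 < ‖r ^ l - 1‖ := norm_sub_pos_iff.2 h.pow_ne_one
  rw [norm_inv, inv_le_comm₀ (norm_pos_iff.2 hx) (by positivity), mul_inv, inv_inv, div_eq_mul_inv]

variable [IsUltrametricDist K]

theorem norm_root_sub_one (h : IsResonant a c lam r t l σ) : ‖r - 1‖ = 1 := by
  have hmod : ¬ 1 ≡ 0 [MOD l] := by
    rw [Nat.modEq_zero_iff_dvd, Nat.dvd_one]
    exact h.one_lt.ne'
  simpa using h.isResidueOrder.norm_pow_sub_pow_eq_one hmod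

theorem norm_target (h : IsResonant a c lam r t l σ) : ‖t‖ = 1 := by
  have hrσ : ‖r ^ σ‖ = 1 := by rw [norm_pow, h.isResidueOrder.norm_eq_one, one_pow]
  rw [← hrσ]
  refine norm_eq_of_norm_sub_lt_right ?_
  rw [norm_sub_rev, hrσ]
  exact h.norm_sub_le.trans_lt h.isResidueOrder.1.2

theorem norm_pow_sub_target_le (h : IsResonant a c lam r t l σ) {n : ℕ} (hn : n ≡ σ [MOD l]) :
    ‖r ^ n - t‖ ≤ ‖r ^ l - 1‖ := by
  rw [← sub_add_sub_cancel _ (r ^ σ) t]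
  exact (IsUltrametricDist.norm_add_le_max _ _).trans
    (max_le (h.isResidueOrder.norm_pow_sub_pow_le hn) h.norm_sub_le)

theorem norm_pow_sub_target_eq_one (h : IsResonant a c lam r t l σ) {n : ℕ}
    (hn : ¬ n ≡ σ [MOD l]) : ‖r ^ n - t‖ = 1 := by
  have hnσ := h.isResidueOrder.norm_pow_sub_pow_eq_one hn
  rw [← hnσ]
  refine norm_eq_of_norm_sub_lt_right ?_
  rw [hnσ, sub_sub_sub_cancel_left]
  exact h.norm_sub_le.trans_lt h.isResidueOrder.1.2

theorem norm_pow_sub_target_le_one (h : IsResonant a c lam r t l σ) (n : ℕ) :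
    ‖r ^ n - t‖ ≤ 1 := by
  simpa [h.isResidueOrder.norm_eq_one, h.norm_target] using norm_sub_le_max (r ^ n) t

theorem apply_ne_zero (h : IsResonant a c lam r t l σ) {n : ℕ} (hn : ¬ n ≡ σ [MOD l]) :
    a n ≠ 0 := by
  refine (map_ne_zero (algebraMap ℚ_[p] K)).1 ?_
  rw [h.algebraMap_eq]
  have hrt : r ^ n - t ≠ 0 := norm_ne_zero_iff.1 (h.norm_pow_sub_target_eq_one hn ▸ one_ne_zero)
  exact mul_ne_zero (mul_ne_zero h.coeff_ne_zero (pow_ne_zero n h.root_ne_zero)) hrt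

theorem norm_ratio_sub_ratio (h : IsResonant a c lam r t l σ) {m n : ℕ} (hm : ¬ m ≡ σ [MOD l])
    (hn : ¬ n ≡ σ [MOD l]) :
    ‖a (m + 1) / a m - a (n + 1) / a n‖ = ‖lam‖ * ‖r ^ m - r ^ n‖ := by
  have hdet : ‖r * -t - -t * 1‖ = 1 := by
    rw [show r * -t - -t * 1 = -(t * (r - 1)) by ring, norm_neg, norm_mul, h.norm_target,
      h.norm_root_sub_one, one_mul]
  have hdenom {j : ℕ} (hj : ¬ j ≡ σ [MOD l]) : ‖1 * r ^ j + -t‖ = 1 := by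
    rw [one_mul, ← sub_eq_add_neg, h.norm_pow_sub_target_eq_one hj]
  rw [← norm_algebraMap' K, map_sub, h.algebraMap_ratio, h.algebraMap_ratio, ← mul_sub, norm_mul,
    norm_moebius_sub_moebius (hdenom hm) (hdenom hn), hdet, one_mul]

theorem norm_inv_ratio_sub_inv_ratio (h : IsResonant a c lam r t l σ) {m n : ℕ}
    (hm : m ≡ σ [MOD l]) (hn : n ≡ σ [MOD l]) :
    ‖a m / a (m + 1) - a n / a (n + 1)‖ = ‖lam‖⁻¹ * ‖r ^ m - r ^ n‖ := by
  have hdet : ‖1 * -t - -t * r‖ = 1 := by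
    rw [show 1 * -t - -t * r = t * (r - 1) by ring, norm_mul, h.norm_target, h.norm_root_sub_one,
      one_mul]
  have hdenom {j : ℕ} (hj : j ≡ σ [MOD l]) : ‖r * r ^ j + -t‖ = 1 := by
    rw [← pow_succ', ← sub_eq_add_neg, h.norm_pow_sub_target_eq_one (not_succ_modEq h.one_lt hj)]
  rw [← norm_algebraMap' K, map_sub, h.algebraMap_inv_ratio, h.algebraMap_inv_ratio, ← mul_sub,
    norm_mul, norm_inv, norm_moebius_sub_moebius (hdenom hm) (hdenom hn), hdet, one_mul]

theorem norm_ratio_le (h : IsResonant a c lam r t l σ) {n : ℕ} (hn : ¬ n ≡ σ [MOD l]) :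
    ‖a (n + 1) / a n‖ ≤ ‖lam‖ := by
  rw [← norm_algebraMap' K, h.algebraMap_ratio, ← pow_succ', one_mul, ← sub_eq_add_neg,
    ← sub_eq_add_neg, norm_mul, norm_div, h.norm_pow_sub_target_eq_one hn, div_one]
  exact mul_le_of_le_one_right (norm_nonneg lam) (h.norm_pow_sub_target_le_one (n + 1))

theorem norm_inv_ratio_le (h : IsResonant a c lam r t l σ) {n : ℕ} (hn : n ≡ σ [MOD l]) :
    ‖a n / a (n + 1)‖ ≤ ‖lam‖⁻¹ * ‖r ^ l - 1‖ := by
  rw [← norm_algebraMap' K, h.algebraMap_inv_ratio, ← pow_succ', one_mul, ← sub_eq_add_neg,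
    ← sub_eq_add_neg, norm_mul, norm_div, norm_inv,
    h.norm_pow_sub_target_eq_one (not_succ_modEq h.one_lt hn), div_one]
  gcongr
  exact h.norm_pow_sub_target_le hn

theorem keplerSet_subset (h : IsResonant a c lam r t l σ) :
    keplerSet p a ⊆
      (⋃ i ∈ Finset.range l \ {σ}, Metric.closedBall (a (i + 1) / a i) (‖lam‖ * ‖r ^ l - 1‖)) ∪
        {x | ‖lam‖ / ‖r ^ l - 1‖ ≤ ‖x‖} := by
  refine closure_minimal ?_ ((isClosed_biUnion_finset fun i _ => Metric.isClosed_closedBall).union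
    (isClosed_le continuous_const continuous_norm))
  rintro _ ⟨n, hn, rfl⟩
  by_cases hnσ : n ≡ σ [MOD l]
  · right
    have hratio : a (n + 1) / a n ≠ 0 :=
      div_ne_zero (h.apply_ne_zero (not_succ_modEq h.one_lt hnσ)) hn
    rw [Set.mem_ofPred_eq, ← h.norm_inv_le_iff hratio, inv_div]
    exact h.norm_inv_ratio_le hnσ
  · left
    have hmod : n % l ≡ n [MOD l] := Nat.mod_modEq n l
    have hmodσ : ¬ n % l ≡ σ [MOD l] := fun h' => hnσ (hmod.symm.trans h')
    have hmem : n % l ∈ Finset.range l \ {σ} := by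
      rw [Finset.mem_sdiff, Finset.mem_range, Finset.mem_singleton]
      exact ⟨Nat.mod_lt n h.isResidueOrder.1.1, fun h' => hmodσ (h' ▸ Nat.ModEq.refl _)⟩
    refine Set.mem_biUnion hmem ?_
    rw [mem_closedBall_iff_norm, h.norm_ratio_sub_ratio hnσ hmodσ]
    gcongr
    exact h.isResidueOrder.norm_pow_sub_pow_le hmod.symm

theorem closedBall_subset_keplerSet (h : IsResonant a c lam r t l σ) {i : ℕ}
    (hi : ¬ i ≡ σ [MOD l]) :
    Metric.closedBall (a (i + 1) / a i) (‖lam‖ * ‖r ^ l - 1‖) ⊆ keplerSet p a := by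
  have hclass (m : ℕ) : ¬ i + l * m ≡ σ [MOD l] := by
    simpa [Nat.ModEq, Nat.add_mul_mod_self_left] using hi
  refine (closedBall_subset_closure_range_of_norm_sub_eq
    (f := fun m => a (i + l * m + 1) / a (i + l * m)) fun m n => ?_).trans (closure_mono ?_)
  · rw [h.norm_ratio_sub_ratio (hclass m) (hclass n),
      h.isResidueOrder.norm_pow_add_mul_sub_pow_add_mul h.norm_pow_lt, mul_assoc]
  · rintro _ ⟨m, rfl⟩
    exact ⟨i + l * m, h.apply_ne_zero (hclass m), rfl⟩

theorem le_norm_subset_keplerSet (h : IsResonant a c lam r t l σ) :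
    {x | ‖lam‖ / ‖r ^ l - 1‖ ≤ ‖x‖} ⊆ keplerSet p a := by
  intro x hx
  have hx0 : x ≠ 0 :=
    norm_pos_iff.1 ((norm_nonneg lam).trans_lt (h.norm_lt_div.trans_le hx))
  have hclass (m : ℕ) : σ + l * m ≡ σ [MOD l] := by simp [Nat.ModEq]
  let f : ℕ → ℚ_[p] := fun m => a (σ + l * m) / a (σ + l * m + 1)
  have hf (m n : ℕ) : ‖f m - f n‖ = ‖lam‖⁻¹ * ‖r ^ l - 1‖ * ‖(m : ℚ_[p]) - n‖ := by
    rw [h.norm_inv_ratio_sub_inv_ratio (hclass m) (hclass n),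
      h.isResidueOrder.norm_pow_add_mul_sub_pow_add_mul h.norm_pow_lt, mul_assoc]
  have hball : x⁻¹ ∈ Metric.closedBall (f 0) (‖lam‖⁻¹ * ‖r ^ l - 1‖) := by
    rw [mem_closedBall_iff_norm]
    exact (norm_sub_le_max _ _).trans
      (max_le ((h.norm_inv_le_iff hx0).2 hx) (h.norm_inv_ratio_le (hclass 0)))
  refine mem_closure_of_inv_mem_closure hx0
    (closedBall_subset_closure_range_of_norm_sub_eq hf hball) ?_
  rintro _ ⟨m, rfl⟩ hm
  exact ⟨σ + l * m, (div_ne_zero_iff.1 hm).1, inv_div _ _⟩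

theorem keplerSet_eq (h : IsResonant a c lam r t l σ) :
    keplerSet p a =
      (⋃ i ∈ Finset.range l \ {σ}, Metric.closedBall (a (i + 1) / a i) (‖lam‖ * ‖r ^ l - 1‖)) ∪
        {x | ‖lam‖ / ‖r ^ l - 1‖ ≤ ‖x‖} :=
  h.keplerSet_subset.antisymm <| Set.union_subset
    (Set.iUnion₂_subset fun _ hi =>
      h.closedBall_subset_keplerSet (not_modEq_of_mem_range_sdiff h.index_lt hi))
    h.le_norm_subset_keplerSet

theorem pairwiseDisjoint_closedBall (h : IsResonant a c lam r t l σ) :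
    (↑(Finset.range l \ {σ}) : Set ℕ).PairwiseDisjoint
      fun i => Metric.closedBall (a (i + 1) / a i) (‖lam‖ * ‖r ^ l - 1‖) := by
  intro i hi j hj hij
  have hmod : ¬ i ≡ j [MOD l] := fun h' => hij <| h'.eq_of_lt_of_lt
    (Finset.mem_range.1 (Finset.mem_sdiff.1 hi).1) (Finset.mem_range.1 (Finset.mem_sdiff.1 hj).1)
  have hdist : ‖a (i + 1) / a i - a (j + 1) / a j‖ = ‖lam‖ := by
    rw [h.norm_ratio_sub_ratio (not_modEq_of_mem_range_sdiff h.index_lt hi)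
      (not_modEq_of_mem_range_sdiff h.index_lt hj),
      h.isResidueOrder.norm_pow_sub_pow_eq_one hmod, mul_one]
  refine (IsUltrametricDist.closedBall_eq_or_disjoint _ _ _).resolve_left fun heq => ?_
  have hmem : a (i + 1) / a i ∈ Metric.closedBall (a (j + 1) / a j) (‖lam‖ * ‖r ^ l - 1‖) :=
    heq ▸ Metric.mem_closedBall_self (by positivity)
  rw [mem_closedBall_iff_norm, hdist] at hmem
  exact hmem.not_gt h.norm_mul_lt

theorem disjoint_closedBall_le_norm (h : IsResonant a c lam r t l σ) {i : ℕ}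
    (hi : ¬ i ≡ σ [MOD l]) :
    Disjoint (Metric.closedBall (a (i + 1) / a i) (‖lam‖ * ‖r ^ l - 1‖))
      {x | ‖lam‖ / ‖r ^ l - 1‖ ≤ ‖x‖} := by
  refine Set.disjoint_left.2 fun x hx hx' => ?_
  have hle : ‖x‖ ≤ ‖lam‖ := by
    rw [← sub_add_cancel x (a (i + 1) / a i)]
    exact (IsUltrametricDist.norm_add_le_max _ _).trans
      (max_le ((mem_closedBall_iff_norm.1 hx).trans h.norm_mul_lt.le) (h.norm_ratio_le hi))
  exact (hle.trans_lt h.norm_lt_div).not_ge hx'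

end IsResonant

end Kepler

theorem mul_pow_add_mul_pow_eq {K : Type*} [Field K] {c₁ c₂ lam₁ lam₂ : K} (hc₂ : c₂ ≠ 0)
    (hlam₁ : lam₁ ≠ 0) (n : ℕ) :
    c₁ * lam₁ ^ n + c₂ * lam₂ ^ n =
      c₂ * lam₁ ^ n * ((lam₂ / lam₁) ^ n - -(c₁ / c₂)) := by
  rw [div_pow]
  field_simp
  ring

theorem stmt_3_general {p : ℕ} [Fact p.Prime] {K : Type*} [NormedField K] [NormedAlgebra ℚ_[p] K]
    [IsUltrametricDist K] {c₁ c₂ lam₁ lam₂ : K} (hc₂ : c₂ ≠ 0) (hlam₁ : lam₁ ≠ 0) {a : ℕ → ℚ_[p]}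
    (ha : ∀ n, algebraMap ℚ_[p] K (a n) = c₁ * lam₁ ^ n + c₂ * lam₂ ^ n)
    {l : ℕ} (hl : IsResidueOrder (lam₂ / lam₁) l) (hl2 : 2 ≤ l) (hne : (lam₂ / lam₁) ^ l ≠ 1)
    (hlt : ‖(lam₂ / lam₁) ^ l - 1‖ ^ (p - 1) < (p : ℝ)⁻¹) {σ : ℕ} (hσl : σ < l)
    (hσ : ‖(lam₂ / lam₁) ^ σ - -(c₁ / c₂)‖ ≤ ‖(lam₂ / lam₁) ^ l - 1‖) :
    (keplerSet p a =
      (⋃ i ∈ Finset.range l \ {σ}, Metric.closedBall (a (i + 1) / a i)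
        (‖lam₂ - lam₁‖ * ‖(lam₂ / lam₁) ^ l - 1‖)) ∪
      {x | ‖lam₂‖ / ‖(lam₂ / lam₁) ^ l - 1‖ ≤ ‖x‖}) ∧
    (↑(Finset.range l \ {σ}) : Set ℕ).PairwiseDisjoint (fun i =>
      Metric.closedBall (a (i + 1) / a i) (‖lam₂ - lam₁‖ * ‖(lam₂ / lam₁) ^ l - 1‖)) ∧
    ∀ i ∈ Finset.range l \ {σ}, Disjoint
      (Metric.closedBall (a (i + 1) / a i) (‖lam₂ - lam₁‖ * ‖(lam₂ / lam₁) ^ l - 1‖))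
      {x | ‖lam₂‖ / ‖(lam₂ / lam₁) ^ l - 1‖ ≤ ‖x‖} := by
  have h : IsResonant a c₂ lam₁ (lam₂ / lam₁) (-(c₁ / c₂)) l σ :=
    ⟨fun n => (ha n).trans (mul_pow_add_mul_pow_eq hc₂ hlam₁ n), hc₂, hlam₁, hl, hl2, hne, hlt, hσl,
      hσ⟩
  have hlam : lam₂ = lam₁ * (lam₂ / lam₁) := (mul_div_cancel₀ lam₂ hlam₁).symm
  have hsub : ‖lam₂ - lam₁‖ = ‖lam₁‖ := by
    rw [hlam, ← mul_sub_one, norm_mul, h.norm_root_sub_one, mul_one]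
  have hnorm : ‖lam₂‖ = ‖lam₁‖ := by rw [hlam, norm_mul, hl.norm_eq_one, mul_one]
  rw [hsub, hnorm]
  exact ⟨h.keplerSet_eq, h.pairwiseDisjoint_closedBall, fun i hi =>
    h.disjoint_closedBall_le_norm (not_modEq_of_mem_range_sdiff hσl hi)⟩

theorem norm_le_inv_of_norm_lt_one {E : Type*} [NormedAddGroup E] {b : ℝ} (hb : 1 < b)
    (hval : ∀ x : E, x ≠ 0 → ∃ m : ℤ, ‖x‖ = b ^ (-m)) {x : E} (hx : ‖x‖ < 1) : ‖x‖ ≤ b⁻¹ := by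
  rcases eq_or_ne x 0 with rfl | hx0
  · rw [norm_zero]
    positivity
  obtain ⟨m, hm⟩ := hval x hx0
  rw [hm, ← zpow_zero b, zpow_lt_zpow_iff_right₀ hb] at hx
  rw [hm, ← zpow_neg_one, zpow_le_zpow_iff_right₀ hb]
  omega

theorem pow_sub_one_lt_inv {p : ℕ} (hp : 3 ≤ p) {y : ℝ} (hy0 : 0 ≤ y) (hy : y ≤ (p : ℝ)⁻¹) :
    y ^ (p - 1) < (p : ℝ)⁻¹ :=
  (pow_le_pow_left₀ hy0 hy _).trans_lt <| pow_lt_self_of_lt_one₀ (by positivity)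
    (inv_lt_one_of_one_lt₀ (by exact_mod_cast (by omega : 1 < p))) (by omega)

theorem zpow_lt_norm_padic_iff {p : ℕ} [Fact p.Prime] (x : ℚ_[p]) (n : ℤ) :
    (p : ℝ) ^ n < ‖x‖ ↔ (p : ℝ) ^ (n + 1) ≤ ‖x‖ := by
  rw [← not_le, Padic.norm_le_pow_iff_norm_lt_pow_add_one, not_lt]

theorem stmt_3 (p : ℕ) [Fact p.Prime] (hp : 3 ≤ p)
    -- `K` is `ℚ_p` or the unramified quadratic extension `ℚ_p(√d)` of `ℚ_p`
    (K : Type) [NormedField K] [Algebra ℚ_[p] K]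
    (hiso : ∀ x : ℚ_[p], ‖algebraMap ℚ_[p] K x‖ = ‖x‖)
    (hna : ∀ x y : K, ‖x + y‖ ≤ max ‖x‖ ‖y‖)
    (hval : ∀ x : K, x ≠ 0 → ∃ m : ℤ, ‖x‖ = (p : ℝ) ^ (-m))
    (d : ℚ_[p]) (hd : ‖d‖ = 1) (hdns : ¬ ∃ y : ℚ_[p], y ^ 2 = d)
    (sq : K) (hsq : sq ^ 2 = algebraMap ℚ_[p] K d)
    (hspan : ∀ x : K, ∃ u v : ℚ_[p], x = algebraMap ℚ_[p] K u + algebraMap ℚ_[p] K v * sq)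
    -- the sequence `a n = c₁ λ₁ ^ n + c₂ λ₂ ^ n`, with values in `ℚ_p`
    (c₁ c₂ lam₁ lam₂ : K) (hc₁ : c₁ ≠ 0) (hc₂ : c₂ ≠ 0) (hlam₁ : lam₁ ≠ 0) (hlam₂ : lam₂ ≠ 0)
    (hnorm : ‖lam₁‖ = ‖lam₂‖) (hpos : 0 < ‖lam₂‖)
    (hru : ∀ n : ℕ, 0 < n → (lam₂ / lam₁) ^ n ≠ 1)
    (a : ℕ → ℚ_[p])
    (ha : ∀ n : ℕ, algebraMap ℚ_[p] K (a n) = c₁ * lam₁ ^ n + c₂ * lam₂ ^ n)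
    -- `l` is the order of `λ₂/λ₁` modulo `p`, with `l ≥ 2`
    (l : ℕ) (hl0 : 0 < l) (hl : ‖(lam₂ / lam₁) ^ l - 1‖ ≤ (p : ℝ)⁻¹)
    (hlmin : ∀ m : ℕ, 0 < m → ‖(lam₂ / lam₁) ^ m - 1‖ ≤ (p : ℝ)⁻¹ → l ≤ m)
    (hl2 : 2 ≤ l)
    -- `k = ν_p((λ₂/λ₁) ^ l - 1)`
    (k : ℕ) (hk : ‖(lam₂ / lam₁) ^ l - 1‖ = (p : ℝ) ^ (-(k : ℤ)))
    -- `-c₁/c₂` belongs to the closure of `{(λ₂/λ₁) ^ n}`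
    (hcl : -(c₁ / c₂) ∈ closure {z : K | ∃ n : ℕ, z = (lam₂ / lam₁) ^ n})
    -- `σ ∈ {0, …, l-1}` satisfies `(λ₂/λ₁) ^ σ ≡ -c₁/c₂ (mod p ^ k)`
    (σ : ℕ) (hσl : σ < l)
    (hσ : ‖(lam₂ / lam₁) ^ σ - -(c₁ / c₂)‖ ≤ (p : ℝ) ^ (-(k : ℤ)))
    -- `vΔ = ν_p(λ₂ - λ₁)` and `v₂ = ν_p(λ₂)`
    (vΔ v₂ : ℤ) (hvΔ : ‖lam₂ - lam₁‖ = (p : ℝ) ^ (-vΔ)) (hv₂ : ‖lam₂‖ = (p : ℝ) ^ (-v₂)) :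
    (keplerSet p a =
      (⋃ i ∈ Finset.range l \ {σ},
        {x : ℚ_[p] | ‖x - a (i + 1) / a i‖ ≤ (p : ℝ) ^ (-(vΔ + (k : ℤ)))}) ∪
      {x : ℚ_[p] | (p : ℝ) ^ (-(v₂ + 1 - (k : ℤ))) < ‖x‖}) ∧
    (↑(Finset.range l \ {σ}) : Set ℕ).PairwiseDisjoint
      (fun i => {x : ℚ_[p] | ‖x - a (i + 1) / a i‖ ≤ (p : ℝ) ^ (-(vΔ + (k : ℤ)))}) ∧
    (∀ i ∈ Finset.range l \ {σ},
      Disjoint {x : ℚ_[p] | ‖x - a (i + 1) / a i‖ ≤ (p : ℝ) ^ (-(vΔ + (k : ℤ)))}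
        {x : ℚ_[p] | (p : ℝ) ^ (-(v₂ + 1 - (k : ℤ))) < ‖x‖}) := by
  have hpR : (1 : ℝ) < p := by exact_mod_cast (by omega : 1 < p)
  have hp0 : (p : ℝ) ≠ 0 := (zero_lt_one.trans hpR).ne'
  let _ : NormedAlgebra ℚ_[p] K :=
    { ‹Algebra ℚ_[p] K› with
      norm_smul_le := fun x y => by rw [Algebra.smul_def, norm_mul, hiso] }
  have : IsUltrametricDist K :=
    IsUltrametricDist.isUltrametricDist_of_forall_norm_add_le_max_norm hna
  have hord : IsResidueOrder (lam₂ / lam₁) l :=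
    ⟨⟨hl0, hl.trans_lt (inv_lt_one_of_one_lt₀ hpR)⟩,
      fun m hm => hlmin m hm.1 (norm_le_inv_of_norm_lt_one hpR hval hm.2)⟩
  have hball (i : ℕ) : {x : ℚ_[p] | ‖x - a (i + 1) / a i‖ ≤ (p : ℝ) ^ (-(vΔ + (k : ℤ)))} =
      Metric.closedBall (a (i + 1) / a i) (‖lam₂ - lam₁‖ * ‖(lam₂ / lam₁) ^ l - 1‖) := by
    ext x
    rw [mem_closedBall_iff_norm, hvΔ, hk, ← zpow_add₀ hp0, ← neg_add, Set.mem_ofPred_eq]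
  have houter : {x : ℚ_[p] | (p : ℝ) ^ (-(v₂ + 1 - (k : ℤ))) < ‖x‖} =
      {x : ℚ_[p] | ‖lam₂‖ / ‖(lam₂ / lam₁) ^ l - 1‖ ≤ ‖x‖} := by
    ext x
    rw [Set.mem_ofPred_eq, Set.mem_ofPred_eq, zpow_lt_norm_padic_iff, hv₂, hk, ← zpow_sub₀ hp0,
      show -(v₂ + 1 - (k : ℤ)) + 1 = -v₂ - -k by ring]
  simp only [hball, houter]
  exact stmt_3_general hc₂ hlam₁ ha hord hl2 (hru l hl0)
    (pow_sub_one_lt_inv hp (norm_nonneg _) hl) hσl (hσ.trans_eq hk.symm)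
end

section
/- Let L(a,1) be a Lucas sequence of the first kind (b = 1), let p ≥ 3 be a prime with rank of appearance α_L(p) > 2, and let λ_1, λ_2 be the characteristic roots. Let l be the order of λ_2/λ_1 modulo π, where π = p if λ_1, λ_2 ∈ ℚ_p or ℚ_p(√D) is an unramified extension of ℚ_p, and π is a uniformizer with ν_p(π) = 1/2 if ℚ_p(√D) is ramified. If p² ∣ D, or if (λ_2/λ_1)^l − 1 is not divisible by π², then the union of the closure in ℚ_p of {L_{n+α_L(p)}/L_n : n ≥ 1} and the closure in ℚ_p of {L_{n+α_L(p)−2}/L_n : n ≥ 1} equals all of ℚ_p. -/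
/-- The Lucas sequence of the first kind `L(a,b)`:
`L 0 = 0`, `L 1 = 1`, `L n = a L (n-1) + b L (n-2)`. -/
def lucasSeq (a b : ℤ) : ℕ → ℤ
  | 0 => 0
  | 1 => 1
  | n + 2 => a * lucasSeq a b (n + 1) + b * lucasSeq a b n

/-!
The roots `λ₁, λ₂` are units, so Binet's formula gives `|(λ₂/λ₁)^n - 1| = |√D| |L n|`. Since
`|u^k - 1| = |k| |u - 1|` for `u` close enough to `1`, it follows that `|L (k m)| = |k| |L m|`
whenever `p ∣ L m`. By d'Ocagne's identity, `k ↦ L (k m) / L (k m + 1)` is then an isometry up to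
the scaling factor `|L m|`, from `ℕ` with the `p`-adic metric, so its image is dense in `L m ℤ_p`.

If `p` divides `L α` exactly once, this is all of `p ℤ_p`. In terms of `t = L n / L (n + 1)` the
addition formula writes `L (n + α) / L n` and `L (n + 1 + (α - 2)) / L (n + 1)` as
`L α / t + b L (α - 1)` and `L (α - 1) + b L (α - 2) t`. For `b ≡ 1` modulo `p` the first map
takes `p ℤ_p \ {0}` onto the `w` with `|w - L (α - 1)| ≥ 1`, the second takes `p ℤ_p` onto the
others.

The hypothesis on `D` or on `(λ₂/λ₁)^l` is what rules out `p² ∣ L α`. If `p ∣ D`, then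
`|L n| = |n|` and `α = p`; if `p ∤ D`, then `|(λ₂/λ₁)^n - 1| = |L n|` and `l = α`.
-/

section Lucas

@[simp]
theorem lucasSeq_zero (a b : ℤ) : lucasSeq a b 0 = 0 := rfl

@[simp]
theorem lucasSeq_one (a b : ℤ) : lucasSeq a b 1 = 1 := rfl

theorem lucasSeq_add_two (a b : ℤ) (n : ℕ) :
    lucasSeq a b (n + 2) = a * lucasSeq a b (n + 1) + b * lucasSeq a b n := rfl

theorem lucasSeq_add_add_one (a b : ℤ) (m n : ℕ) :
    lucasSeq a b (m + n + 1) =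
      lucasSeq a b (m + 1) * lucasSeq a b (n + 1) + b * lucasSeq a b m * lucasSeq a b n := by
  induction n using Nat.twoStepInduction with
  | zero => simp
  | one => simp [lucasSeq_add_two, mul_comm a]
  | more n ih₁ ih₂ =>
    rw [show m + (n + 2) + 1 = m + n + 1 + 2 by ring, lucasSeq_add_two,
      show m + n + 1 + 1 = m + (n + 1) + 1 by ring, ih₁, ih₂, lucasSeq_add_two a b (n + 1),
      lucasSeq_add_two a b n]
    ring

theorem lucasSeq_dvd_lucasSeq_mul (a b : ℤ) (m k : ℕ) :
    lucasSeq a b m ∣ lucasSeq a b (k * m) := by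
  obtain _ | m := m
  · simp
  induction k with
  | zero => simp
  | succ k ih =>
    rw [add_one_mul, ← add_assoc, lucasSeq_add_add_one]
    exact dvd_add (dvd_mul_left _ _) ((ih.mul_left b).mul_right _)

theorem lucasSeq_docagne (a b : ℤ) (i d : ℕ) :
    lucasSeq a b (i + d) * lucasSeq a b (i + 1) - lucasSeq a b i * lucasSeq a b (i + d + 1) =
      (-b) ^ i * lucasSeq a b d := by
  induction i with
  | zero => simp
  | succ i ih =>
    rw [show i + 1 + d = i + d + 1 by ring, lucasSeq_add_two a b (i + d), lucasSeq_add_two a b i,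
      pow_succ]
    linear_combination -b * ih

theorem sub_mul_lucasSeq {R : Type*} [CommRing R] {a b : ℤ} {x y : R} (hsum : x + y = a)
    (hprod : x * y = -b) (n : ℕ) : (x - y) * lucasSeq a b n = x ^ n - y ^ n := by
  induction n using Nat.twoStepInduction with
  | zero => simp
  | one => simp
  | more n ih₁ ih₂ =>
    rw [lucasSeq_add_two]
    push_cast
    linear_combination (a : R) * ih₂ + b * ih₁ - (x ^ (n + 1) - y ^ (n + 1)) * hsum
      + (x ^ n - y ^ n) * hprod

end Lucas

section PadicNorm

variable {p : ℕ} [Fact p.Prime]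

theorem inv_pow_lt_inv_pow {m n : ℕ} (h : m < n) : (p : ℝ)⁻¹ ^ n < (p : ℝ)⁻¹ ^ m := by
  have hp : (1 : ℝ) < p := mod_cast (Fact.out : p.Prime).one_lt
  exact pow_lt_pow_right_of_lt_one₀ (by positivity) (inv_lt_one_of_one_lt₀ hp) h

theorem norm_le_inv_of_norm_lt_one_s11 {x : ℚ_[p]} (hx : ‖x‖ < 1) : ‖x‖ ≤ (p : ℝ)⁻¹ := by
  have h := (Padic.norm_le_pow_iff_norm_lt_pow_add_one x (-1)).2 (by simpa using hx)
  simpa using h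

theorem pow_dvd_iff_norm_intCast_le {c : ℤ} {n : ℕ} :
    (p : ℤ) ^ n ∣ c ↔ ‖(c : ℚ_[p])‖ ≤ (p : ℝ)⁻¹ ^ n := by
  simpa using (Padic.norm_int_le_pow_iff_dvd c n).symm

theorem norm_intCast_le_inv {c : ℤ} (hc : (p : ℤ) ∣ c) : ‖(c : ℚ_[p])‖ ≤ (p : ℝ)⁻¹ := by
  simpa using (pow_dvd_iff_norm_intCast_le (n := 1)).1 (by simpa using hc)

theorem dvd_iff_norm_intCast_le {ρ : ℝ} (hρ : (p : ℝ)⁻¹ ≤ ρ) (hρ1 : ρ < 1) {c : ℤ} :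
    (p : ℤ) ∣ c ↔ ‖(c : ℚ_[p])‖ ≤ ρ :=
  ⟨fun h => (norm_intCast_le_inv h).trans hρ,
    fun h => Padic.norm_intCast_lt_one_iff.1 (h.trans_lt hρ1)⟩

theorem norm_intCast_eq_one_of_not_dvd {c : ℤ} (hc : ¬ (p : ℤ) ∣ c) : ‖(c : ℚ_[p])‖ = 1 :=
  (Padic.norm_int_le_one c).antisymm (not_lt.1 (mt Padic.norm_intCast_lt_one_iff.1 hc))

theorem norm_intCast_eq_one_of_dvd_sub_one {b : ℤ} (hb : (p : ℤ) ∣ b - 1) : ‖(b : ℚ_[p])‖ = 1 :=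
  norm_intCast_eq_one_of_not_dvd fun h =>
    (Nat.prime_iff_prime_int.1 (Fact.out : p.Prime)).not_isUnit
      (isUnit_of_dvd_one (by simpa using dvd_sub h hb))

theorem norm_intCast_eq_inv {c : ℤ} (hc : (p : ℤ) ∣ c) (hc2 : ¬ (p : ℤ) ^ 2 ∣ c) :
    ‖(c : ℚ_[p])‖ = (p : ℝ)⁻¹ := by
  obtain ⟨u, rfl⟩ := hc
  have hu : ¬ (p : ℤ) ∣ u := fun h => hc2 (pow_two (p : ℤ) ▸ mul_dvd_mul_left _ h)
  rw [Int.cast_mul, norm_mul, Int.cast_natCast, Padic.norm_p, norm_intCast_eq_one_of_not_dvd hu,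
    mul_one]

end PadicNorm

section Ultrametric

theorem norm_eq_one_of_norm_add_le_one {K : Type*} [NormedField K] [IsUltrametricDist K] {x y : K}
    (hadd : ‖x + y‖ ≤ 1) (hmul : ‖x * y‖ = 1) : ‖x‖ = 1 := by
  rw [norm_mul] at hmul
  by_contra hx
  have hne : ‖x‖ ≠ ‖y‖ := fun h => hx <| by nlinarith [norm_nonneg x]
  rw [IsUltrametricDist.norm_add_eq_max_of_norm_ne_norm hne, max_le_iff] at hadd
  exact hx (by nlinarith [norm_nonneg x])

theorem one_add_pow_succ_sub_one {K : Type*} [Field K] [CharZero K] (x : K) (n : ℕ) :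
    (1 + x) ^ (n + 1) - 1 = ((n + 1 : ℕ) : K) * x *
      (1 + ∑ k ∈ Finset.range n,
        (n.choose (k + 1) : K) * (x ^ (k + 1) / ((k + 1 + 1 : ℕ) : K))) := by
  have hterm : ∀ k : ℕ, x ^ (k + 1) * ((n + 1).choose (k + 1) : K) =
      ((n + 1 : ℕ) : K) * x * ((n.choose k : K) * (x ^ k / ((k + 1 : ℕ) : K))) := fun k => by
    have hchoose : ((n + 1 : ℕ) : K) * n.choose k = (n + 1).choose (k + 1) * ((k + 1 : ℕ) : K) :=
      mod_cast Nat.add_one_mul_choose_eq n k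
    have hk : ((k + 1 : ℕ) : K) ≠ 0 := Nat.cast_ne_zero.2 k.succ_ne_zero
    field_simp
    linear_combination -x ^ (k + 1) * hchoose
  rw [add_comm 1 x, add_pow, Finset.sum_range_succ']
  simp only [one_pow, mul_one, hterm]
  rw [← Finset.mul_sum, Finset.sum_range_succ']
  simp [add_comm]

theorem sub_one_mul_lt_pow {m : ℕ} (hm : 0 < m) (e : ℕ) : (m - 1) * e < m ^ e := by
  have hbernoulli := one_add_mul_le_pow (a := (m - 1 : ℤ)) (by omega) e
  rw [add_sub_cancel] at hbernoulli
  zify [Nat.one_le_iff_ne_zero.2 hm.ne']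
  linarith

variable {p : ℕ} [Fact p.Prime]

theorem pow_lt_norm_natCast_succ {r : ℝ} (hr0 : 0 ≤ r) (hr : r ^ (p - 1) < (p : ℝ)⁻¹) {k : ℕ}
    (hk : k ≠ 0) : r ^ k < ‖((k + 1 : ℕ) : ℚ_[p])‖ := by
  have hp : p.Prime := Fact.out
  have hr1 : r < 1 := lt_of_not_ge fun h =>
    (one_le_pow₀ h).not_gt (hr.trans (inv_lt_one_of_one_lt₀ (mod_cast hp.one_lt)))
  obtain ⟨e, j, hj, hkj⟩ := Nat.exists_eq_pow_mul_and_not_dvd k.succ_ne_zero p hp.ne_one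
  have hnorm : ‖((k + 1 : ℕ) : ℚ_[p])‖ = (p : ℝ)⁻¹ ^ e := by
    rw [← Nat.succ_eq_add_one, hkj, Nat.cast_mul, Nat.cast_pow, norm_mul, norm_pow, Padic.norm_p,
      Padic.norm_natCast_eq_one_iff.2 (hp.coprime_iff_not_dvd.2 hj), mul_one]
  rw [hnorm]
  rcases eq_or_ne e 0 with rfl | he
  · simpa using pow_lt_one₀ hr0 hr1 hk
  have hle : (p - 1) * e ≤ k := Nat.lt_succ_iff.1 <|
    (sub_one_mul_lt_pow hp.pos e).trans_le <|
      hkj ▸ Nat.le_mul_of_pos_right _ (Nat.pos_of_ne_zero fun h => hj (h ▸ dvd_zero p))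
  calc r ^ k ≤ (r ^ (p - 1)) ^ e := by
        rw [← pow_mul]; exact pow_le_pow_of_le_one hr0 hr1.le hle
    _ < (p : ℝ)⁻¹ ^ e := pow_lt_pow_left₀ hr (by positivity) he

variable {K : Type*} [NormedField K] [NormedAlgebra ℚ_[p] K]

theorem norm_natCast_padic (n : ℕ) : ‖(n : K)‖ = ‖(n : ℚ_[p])‖ := by
  rw [← norm_algebraMap' K (n : ℚ_[p]), map_natCast]

theorem norm_intCast_padic (c : ℤ) : ‖(c : K)‖ = ‖(c : ℚ_[p])‖ := by
  rw [← norm_algebraMap' K (c : ℚ_[p]), map_intCast]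

-- In the binomial expansion of `(1 + (u - 1)) ^ n` the linear term dominates.
theorem norm_pow_sub_one {u : K} (hu : ‖u - 1‖ ^ (p - 1) < (p : ℝ)⁻¹) (n : ℕ) :
    ‖u ^ n - 1‖ = ‖(n : ℚ_[p])‖ * ‖u - 1‖ := by
  have : IsUltrametricDist K := .of_normedAlgebra ℚ_[p]
  have : CharZero K := charZero_of_injective_algebraMap (algebraMap ℚ_[p] K).injective
  obtain _ | n := n
  · simp
  set x := u - 1
  have hsum : ‖∑ k ∈ Finset.range n, (n.choose (k + 1) : K) * (x ^ (k + 1) / ((k + 1 + 1 : ℕ) : K))‖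
      < 1 := by
    refine Finset.sum_induction _ (‖·‖ < 1)
      (fun y z hy hz => (IsUltrametricDist.norm_add_le_max y z).trans_lt (max_lt hy hz))
      (by simp) fun k _ => ?_
    have hlt := pow_lt_norm_natCast_succ (norm_nonneg x) hu k.succ_ne_zero
    calc _ ≤ ‖x ^ (k + 1) / ((k + 1 + 1 : ℕ) : K)‖ := by
          rw [norm_mul]
          exact mul_le_of_le_one_left (norm_nonneg _) (IsUltrametricDist.norm_natCast_le_one K _)
      _ < 1 := by
          rw [norm_div, norm_pow, norm_natCast_padic (p := p)]
          exact (div_lt_one ((pow_nonneg (norm_nonneg x) _).trans_lt hlt)).2 hlt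
  rw [show u = 1 + x by simp [x], one_add_pow_succ_sub_one, norm_mul, norm_mul,
    norm_natCast_padic (p := p),
    IsUltrametricDist.norm_add_eq_max_of_norm_ne_norm (by rw [norm_one]; exact hsum.ne'),
    norm_one, max_eq_left hsum.le, mul_one]

end Ultrametric

section Density

variable {p : ℕ} [Fact p.Prime]

theorem toZModPow_eq_iff_norm_sub_le {x y : ℤ_[p]} {N : ℕ} :
    PadicInt.toZModPow N x = PadicInt.toZModPow N y ↔ ‖x - y‖ ≤ (p : ℝ) ^ (-N : ℤ) := by
  rw [PadicInt.norm_le_pow_iff_mem_span_pow, ← PadicInt.ker_toZModPow, RingHom.mem_ker, map_sub,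
    sub_eq_zero]

-- The hypothesis makes `f` injective, hence surjective, modulo every power of `p`.
theorem denseRange_of_norm_sub_eq {f : ℕ → ℤ_[p]}
    (hf : ∀ i j, ‖f i - f j‖ = ‖(i - j : ℤ_[p])‖) : DenseRange f := by
  rw [Metric.denseRange_iff]
  intro z ε hε
  obtain ⟨N, hN⟩ := PadicInt.exists_pow_neg_lt p hε
  let g : ZMod (p ^ N) → ZMod (p ^ N) := fun k => PadicInt.toZModPow N (f k.val)
  have : NeZero (p ^ N) := ⟨pow_ne_zero _ (Fact.out : p.Prime).ne_zero⟩
  have hg : g.Injective := fun i j hij => by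
    have h := toZModPow_eq_iff_norm_sub_le.1 hij
    rw [hf, ← toZModPow_eq_iff_norm_sub_le] at h
    simpa using h
  obtain ⟨k, hk⟩ := Finite.surjective_of_injective hg (PadicInt.toZModPow N z)
  refine ⟨k.val, (?_ : dist z (f k.val) ≤ _).trans_lt hN⟩
  rw [dist_eq_norm]
  exact toZModPow_eq_iff_norm_sub_le.1 hk.symm

theorem closedBall_subset_closure_range {f : ℕ → ℚ_[p]} {c : ℚ_[p]} (hc : c ≠ 0)
    (hf : ∀ i, ‖f i‖ ≤ ‖c‖) (hsub : ∀ i j, ‖f i - f j‖ = ‖(i - j : ℚ_[p])‖ * ‖c‖) :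
    Metric.closedBall 0 ‖c‖ ⊆ closure (Set.range f) := by
  have hc' := norm_pos_iff.2 hc
  have hle : ∀ z : ℚ_[p], ‖z‖ ≤ ‖c‖ → ‖z / c‖ ≤ 1 := fun z hz => by
    rw [norm_div]
    exact div_le_one_of_le₀ hz hc'.le
  let g : ℕ → ℤ_[p] := fun i => ⟨f i / c, hle _ (hf i)⟩
  have hg : DenseRange g := denseRange_of_norm_sub_eq fun i j => by
    rw [PadicInt.norm_def, PadicInt.norm_def]
    push_cast
    rw [← sub_div, norm_div, hsub, mul_div_cancel_right₀ _ hc'.ne']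
  intro z hz
  have hcont : Continuous fun t : ℤ_[p] => c * (t : ℚ_[p]) := by fun_prop
  have := map_mem_closure hcont (hg ⟨z / c, hle z (mem_closedBall_zero_iff.1 hz)⟩)
    (t := Set.range f) (by
      rintro _ ⟨i, rfl⟩
      exact ⟨i, (mul_div_cancel₀ (f i) hc).symm⟩)
  simpa [mul_div_cancel₀ z hc] using this

end Density

section Roots

theorem exists_add_eq_mul_eq_neg {L : Type*} [Field L] [IsAlgClosed L] [NeZero (2 : L)] (s t : L) :
    ∃ x y : L, x + y = s ∧ x * y = -t := by
  obtain ⟨x, hx⟩ := exists_quadratic_eq_zero (b := -s) (c := -t) one_ne_zero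
    (IsAlgClosed.exists_eq_mul_self _)
  exact ⟨x, s - x, by ring, by linear_combination -hx⟩

variable {p : ℕ} [Fact p.Prime] {K : Type*} [NormedField K] [NormedAlgebra ℚ_[p] K] {a b : ℤ}
  {x y : K}

theorem norm_sub_sq_eq_norm_discr (hsum : x + y = a) (hprod : x * y = -b) :
    ‖x - y‖ ^ 2 = ‖((a ^ 2 + 4 * b : ℤ) : ℚ_[p])‖ := by
  rw [← norm_intCast_padic (K := K), ← norm_pow]
  congr 1
  push_cast
  linear_combination (x + y + a) * hsum - 4 * hprod

theorem norm_div_pow_sub_one (hsum : x + y = a) (hprod : x * y = -b)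
    (hb : ‖(b : ℚ_[p])‖ = 1) (n : ℕ) :
    ‖(y / x) ^ n - 1‖ = ‖x - y‖ * ‖(lucasSeq a b n : ℚ_[p])‖ := by
  have : IsUltrametricDist K := .of_normedAlgebra ℚ_[p]
  have hx : ‖x‖ = 1 := norm_eq_one_of_norm_add_le_one
    (by rw [hsum, norm_intCast_padic (p := p)]; exact Padic.norm_int_le_one a)
    (by rw [hprod, norm_neg, norm_intCast_padic (p := p), hb])
  have hx0 : x ≠ 0 := norm_ne_zero_iff.1 (hx ▸ one_ne_zero)
  rw [← norm_intCast_padic (K := K), ← norm_mul, sub_mul_lucasSeq hsum hprod, norm_sub_rev,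
    div_pow, one_sub_div (pow_ne_zero n hx0), norm_div, norm_pow, hx, one_pow, div_one]

end Roots

section Divisibility

variable {p : ℕ} [Fact p.Prime] {a b : ℤ}

-- For roots `x`, `y`, the condition on `m` is `‖(y / x) ^ m - 1‖ ^ (p - 1) < p⁻¹`, squared.
theorem norm_lucasSeq_mul_of_norm_discr_lt (hD : a ^ 2 + 4 * b ≠ 0) (hb : ‖(b : ℚ_[p])‖ = 1)
    {m : ℕ} (hm : (‖((a ^ 2 + 4 * b : ℤ) : ℚ_[p])‖ * ‖(lucasSeq a b m : ℚ_[p])‖ ^ 2) ^ (p - 1) <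
      (p : ℝ)⁻¹ ^ 2) (k : ℕ) :
    ‖(lucasSeq a b (k * m) : ℚ_[p])‖ = ‖(k : ℚ_[p])‖ * ‖(lucasSeq a b m : ℚ_[p])‖ := by
  obtain ⟨x, y, hsum, hprod⟩ := exists_add_eq_mul_eq_neg (a : PadicAlgCl p) b
  have hdiscr := norm_sub_sq_eq_norm_discr (p := p) hsum hprod
  have hxy : ‖x - y‖ ≠ 0 := fun h => hD <| by
    rw [h, zero_pow two_ne_zero, eq_comm, norm_eq_zero] at hdiscr
    exact_mod_cast hdiscr
  have hu : ‖(y / x) ^ m - 1‖ ^ (p - 1) < (p : ℝ)⁻¹ := by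
    refine lt_of_pow_lt_pow_left₀ 2 (by positivity) ?_
    rwa [norm_div_pow_sub_one hsum hprod hb, ← pow_mul, mul_comm (p - 1), pow_mul, mul_pow, hdiscr]
  refine mul_left_cancel₀ hxy ?_
  rw [← norm_div_pow_sub_one hsum hprod hb, mul_comm k, pow_mul, norm_pow_sub_one hu,
    norm_div_pow_sub_one hsum hprod hb]
  ring

theorem norm_lucasSeq_mul (hp : 3 ≤ p) (hD : a ^ 2 + 4 * b ≠ 0) (hb : ‖(b : ℚ_[p])‖ = 1) {m : ℕ}
    (hm : (p : ℤ) ∣ lucasSeq a b m) (k : ℕ) :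
    ‖(lucasSeq a b (k * m) : ℚ_[p])‖ = ‖(k : ℚ_[p])‖ * ‖(lucasSeq a b m : ℚ_[p])‖ := by
  refine norm_lucasSeq_mul_of_norm_discr_lt hD hb ?_ k
  calc _ ≤ (1 * (p : ℝ)⁻¹ ^ 2) ^ (p - 1) := by
        gcongr
        · exact Padic.norm_int_le_one _
        · exact norm_intCast_le_inv hm
    _ = (p : ℝ)⁻¹ ^ (2 * (p - 1)) := by rw [one_mul, pow_mul]
    _ < (p : ℝ)⁻¹ ^ 2 := inv_pow_lt_inv_pow (by omega)

theorem norm_lucasSeq_of_dvd_discr (hp : 3 < p) (hD : a ^ 2 + 4 * b ≠ 0)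
    (hb : ‖(b : ℚ_[p])‖ = 1) (hdvd : (p : ℤ) ∣ a ^ 2 + 4 * b) (n : ℕ) :
    ‖(lucasSeq a b n : ℚ_[p])‖ = ‖(n : ℚ_[p])‖ := by
  suffices h : (‖((a ^ 2 + 4 * b : ℤ) : ℚ_[p])‖ * ‖(lucasSeq a b 1 : ℚ_[p])‖ ^ 2) ^ (p - 1) <
      (p : ℝ)⁻¹ ^ 2 by
    simpa using norm_lucasSeq_mul_of_norm_discr_lt hD hb h n
  calc _ = ‖((a ^ 2 + 4 * b : ℤ) : ℚ_[p])‖ ^ (p - 1) := by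
        rw [lucasSeq_one, Int.cast_one, norm_one, one_pow, mul_one]
    _ ≤ (p : ℝ)⁻¹ ^ (p - 1) := pow_le_pow_left₀ (norm_nonneg _) (norm_intCast_le_inv hdvd) _
    _ < (p : ℝ)⁻¹ ^ 2 := inv_pow_lt_inv_pow (by omega)

theorem norm_lucasSeq_succ_eq_one (hb : ‖(b : ℚ_[p])‖ = 1) {n : ℕ}
    (hn : (p : ℤ) ∣ lucasSeq a b n) : ‖(lucasSeq a b (n + 1) : ℚ_[p])‖ = 1 := by
  refine le_antisymm (Padic.norm_int_le_one _) (not_lt.1 fun hlt => ?_)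
  have hdvd : (p : ℤ) ∣ (-b) ^ n := by
    have h := lucasSeq_docagne a b n 1
    rw [lucasSeq_one, mul_one] at h
    exact h ▸ dvd_sub ((Padic.norm_intCast_lt_one_iff.1 hlt).mul_left _) (hn.mul_right _)
  have hlt' := Padic.norm_intCast_lt_one_iff.2 hdvd
  simp [hb] at hlt'

theorem norm_lucasSeq_div_sub_div (hb : ‖(b : ℚ_[p])‖ = 1) {i d : ℕ}
    (hi : (p : ℤ) ∣ lucasSeq a b i) (hid : (p : ℤ) ∣ lucasSeq a b (i + d)) :
    ‖(lucasSeq a b (i + d) / lucasSeq a b (i + d + 1) - lucasSeq a b i / lucasSeq a b (i + 1) :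
      ℚ_[p])‖ = ‖(lucasSeq a b d : ℚ_[p])‖ := by
  have h₁ := norm_lucasSeq_succ_eq_one hb hi
  have h₂ := norm_lucasSeq_succ_eq_one hb hid
  have hdocagne := congrArg (Int.cast : ℤ → ℚ_[p]) (lucasSeq_docagne a b i d)
  push_cast at hdocagne
  rw [div_sub_div _ _ (norm_ne_zero_iff.1 (h₂ ▸ one_ne_zero))
    (norm_ne_zero_iff.1 (h₁ ▸ one_ne_zero)), mul_comm (lucasSeq a b (i + d + 1) : ℚ_[p]), hdocagne]
  simp [h₁, h₂, hb]

end Divisibility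

section Quotients

variable {p : ℕ} [Fact p.Prime] {a b : ℤ}

theorem closedBall_subset_closure_lucasSeq_div (hp : 3 ≤ p) (hD : a ^ 2 + 4 * b ≠ 0)
    (hb : ‖(b : ℚ_[p])‖ = 1) {m : ℕ} (hm : (p : ℤ) ∣ lucasSeq a b m) (hm0 : lucasSeq a b m ≠ 0) :
    Metric.closedBall 0 ‖(lucasSeq a b m : ℚ_[p])‖ ⊆ closure (Set.range fun k : ℕ =>
      (lucasSeq a b ((k + 1) * m) / lucasSeq a b ((k + 1) * m + 1) : ℚ_[p])) := by
  have hmul := norm_lucasSeq_mul (p := p) hp hD hb hm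
  have hdvd (k : ℕ) := hm.trans (lucasSeq_dvd_lucasSeq_mul a b m k)
  refine closedBall_subset_closure_range (mod_cast hm0) (fun k => ?_) fun i j => ?_
  · rw [norm_div, norm_lucasSeq_succ_eq_one hb (hdvd _), div_one, hmul]
    exact mul_le_of_le_one_left (norm_nonneg _) (IsUltrametricDist.norm_natCast_le_one ℚ_[p] _)
  · wlog hji : j ≤ i generalizing i j
    · rw [norm_sub_rev, this j i (le_of_not_ge hji), norm_sub_rev (j : ℚ_[p])]
    obtain ⟨d, rfl⟩ := Nat.exists_eq_add_of_le hji
    have hadd : (j + d + 1) * m = (j + 1) * m + d * m := by ring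
    rw [hadd, norm_lucasSeq_div_sub_div hb (hdvd _) (hadd ▸ hdvd _), hmul]
    simp

/-- The set of quotients `L (n + d) / L n`, `n ≥ 1`, of terms of the Lucas sequence `L(a, b)` at
distance `d`, viewed in `ℚ_p`. A term `L n = 0` contributes the junk value `0`. -/
def lucasQuotients (p : ℕ) [Fact p.Prime] (a b : ℤ) (d : ℕ) : Set ℚ_[p] :=
  {x | ∃ n : ℕ, 1 ≤ n ∧ x = (lucasSeq a b (n + d) : ℚ_[p]) / (lucasSeq a b n : ℚ_[p])}

-- With `t = L n / L (n + 1)`, the addition formula reads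
-- `L (n + m + 1) / L n = L (m + 1) / t + b L m`.
theorem mem_closure_lucasQuotients_of_one_le_norm (hp : 3 ≤ p) (hD : a ^ 2 + 4 * b ≠ 0)
    (hb : ‖(b : ℚ_[p])‖ = 1) {m : ℕ} (hm : (p : ℤ) ∣ lucasSeq a b (m + 1))
    (hm0 : lucasSeq a b (m + 1) ≠ 0) {w : ℚ_[p]} (hw : 1 ≤ ‖w - b * lucasSeq a b m‖) :
    w ∈ closure (lucasQuotients p a b (m + 1)) := by
  have hL : (lucasSeq a b (m + 1) : ℚ_[p]) ≠ 0 := mod_cast hm0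
  have hw0 : w - b * lucasSeq a b m ≠ 0 := norm_pos_iff.1 (one_pos.trans_le hw)
  set t : ℚ_[p] := lucasSeq a b (m + 1) / (w - b * lucasSeq a b m) with ht
  have ht0 : t ≠ 0 := div_ne_zero hL hw0
  have htmem : t ∈ Metric.closedBall 0 ‖(lucasSeq a b (m + 1) : ℚ_[p])‖ := by
    rw [mem_closedBall_zero_iff, norm_div]
    exact div_le_self (norm_nonneg _) hw
  have hcont : ContinuousAt (fun s : ℚ_[p] => lucasSeq a b (m + 1) / s + b * lucasSeq a b m) t := by
    fun_prop (disch := assumption)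
  have hmem := hcont.continuousWithinAt.mem_closure
    (closedBall_subset_closure_lucasSeq_div hp hD hb hm hm0 htmem)
    (t := lucasQuotients p a b (m + 1)) ?_
  · rwa [ht, div_div_cancel₀ hL, sub_add_cancel] at hmem
  · rintro _ ⟨k, rfl⟩
    have hk : (lucasSeq a b ((k + 1) * (m + 1)) : ℚ_[p]) ≠ 0 := by
      rw [← norm_ne_zero_iff, norm_lucasSeq_mul hp hD hb hm]
      exact mul_ne_zero (norm_ne_zero_iff.2 (mod_cast k.succ_ne_zero)) (norm_ne_zero_iff.2 hL)
    refine ⟨(k + 1) * (m + 1), by simp [Nat.succ_le_iff], ?_⟩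
    rw [← add_assoc, lucasSeq_add_add_one]
    push_cast
    field_simp

-- With `t = L n / L (n + 1)`, the addition formula reads
-- `L (n + 1 + r) / L (n + 1) = L (r + 1) + b L r t`.
theorem mem_closure_lucasQuotients_of_norm_le (hp : 3 ≤ p) (hD : a ^ 2 + 4 * b ≠ 0)
    (hb : ‖(b : ℚ_[p])‖ = 1) {r m : ℕ} (hr0 : lucasSeq a b r ≠ 0)
    (hm : (p : ℤ) ∣ lucasSeq a b m) (hm0 : lucasSeq a b m ≠ 0) {w : ℚ_[p]}
    (hw : ‖w - lucasSeq a b (r + 1)‖ ≤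
      ‖(lucasSeq a b r : ℚ_[p])‖ * ‖(lucasSeq a b m : ℚ_[p])‖) :
    w ∈ closure (lucasQuotients p a b r) := by
  have hbr : (b * lucasSeq a b r : ℚ_[p]) ≠ 0 :=
    mul_ne_zero (norm_ne_zero_iff.1 (hb ▸ one_ne_zero)) (mod_cast hr0)
  set t : ℚ_[p] := (w - lucasSeq a b (r + 1)) / (b * lucasSeq a b r) with ht
  have htmem : t ∈ Metric.closedBall 0 ‖(lucasSeq a b m : ℚ_[p])‖ := by
    rw [mem_closedBall_zero_iff, norm_div, div_le_iff₀' (norm_pos_iff.2 hbr), norm_mul, hb, one_mul]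
    exact hw
  have hcont : Continuous fun s : ℚ_[p] => lucasSeq a b (r + 1) + b * lucasSeq a b r * s := by
    fun_prop
  have hmem := map_mem_closure hcont
    (closedBall_subset_closure_lucasSeq_div hp hD hb hm hm0 htmem)
    (t := lucasQuotients p a b r) ?_
  · rwa [ht, mul_div_cancel₀ _ hbr, add_sub_cancel] at hmem
  · rintro _ ⟨k, rfl⟩
    have hk : (lucasSeq a b ((k + 1) * m + 1) : ℚ_[p]) ≠ 0 :=
      norm_ne_zero_iff.1
        (norm_lucasSeq_succ_eq_one hb (hm.trans (lucasSeq_dvd_lucasSeq_mul a b m _)) ▸ one_ne_zero)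
    refine ⟨(k + 1) * m + 1, Nat.le_add_left _ _, ?_⟩
    rw [add_right_comm, lucasSeq_add_add_one]
    push_cast
    field_simp

theorem closure_lucasQuotients_union_eq_univ (hp : 3 ≤ p) (hD : a ^ 2 + 4 * b ≠ 0)
    (hb : (p : ℤ) ∣ b - 1) {r : ℕ} (hr : ¬ (p : ℤ) ∣ lucasSeq a b r)
    (hdvd : (p : ℤ) ∣ lucasSeq a b (r + 2)) (hndvd : ¬ (p : ℤ) ^ 2 ∣ lucasSeq a b (r + 2)) :
    closure (lucasQuotients p a b (r + 2)) ∪ closure (lucasQuotients p a b r) = Set.univ := by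
  have hb1 : ‖(b : ℚ_[p])‖ = 1 := norm_intCast_eq_one_of_dvd_sub_one hb
  have hr0 : lucasSeq a b r ≠ 0 := fun h => hr (h ▸ dvd_zero _)
  have hm0 : lucasSeq a b (r + 2) ≠ 0 := fun h => hndvd (h ▸ dvd_zero _)
  refine Set.eq_univ_of_forall fun w => ?_
  rcases le_or_gt 1 ‖w - b * lucasSeq a b (r + 1)‖ with hw | hw
  · exact .inl (mem_closure_lucasQuotients_of_one_le_norm hp hD hb1 hdvd hm0 hw)
  · refine .inr (mem_closure_lucasQuotients_of_norm_le hp hD hb1 hr0 hdvd hm0 ?_)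
    rw [norm_intCast_eq_one_of_not_dvd hr, norm_intCast_eq_inv hdvd hndvd, one_mul]
    refine norm_le_inv_of_norm_lt_one_s11 ?_
    have hshift : ‖((b - 1 : ℤ) * lucasSeq a b (r + 1) : ℚ_[p])‖ < 1 := by
      exact_mod_cast Padic.norm_intCast_lt_one_iff.2 (hb.mul_right _)
    calc ‖w - lucasSeq a b (r + 1)‖
        = ‖(w - b * lucasSeq a b (r + 1)) + (b - 1 : ℤ) * lucasSeq a b (r + 1)‖ := by
          push_cast; ring_nf
      _ < 1 := (IsUltrametricDist.norm_add_le_max _ _).trans_lt (max_lt hw hshift)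

end Quotients

section RankOfAppearance

variable {p : ℕ} [Fact p.Prime] {a b : ℤ} {α : ℕ}

theorem three_lt_of_dvd_discr (hp : 3 ≤ p) (hb : (p : ℤ) ∣ b - 1) (hdvd : (p : ℤ) ∣ a ^ 2 + 4 * b) :
    3 < p := by
  refine hp.lt_of_ne ?_
  rintro rfl
  have h : (3 : ℤ) ∣ a ^ 2 + 1 := by
    have := dvd_sub hdvd (hb.mul_left 4)
    push_cast at this
    omega
  have ha : a % 3 = 0 ∨ a % 3 = 1 ∨ a % 3 = 2 := by omega
  rcases ha with ha | ha | ha <;>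
    simp [Int.dvd_iff_emod_eq_zero, pow_two, Int.add_emod, Int.mul_emod, ha] at h

theorem not_sq_dvd_lucasSeq_of_dvd_discr (hp : 3 < p) (hD : a ^ 2 + 4 * b ≠ 0)
    (hb : ‖(b : ℚ_[p])‖ = 1) (hdvd : (p : ℤ) ∣ a ^ 2 + 4 * b) (hα0 : 0 < α)
    (hαmin : ∀ m : ℕ, 0 < m → (p : ℤ) ∣ lucasSeq a b m → α ≤ m) :
    ¬ (p : ℤ) ^ 2 ∣ lucasSeq a b α := fun hsq => by
  have hnorm := norm_lucasSeq_of_dvd_discr hp hD hb hdvd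
  have hαp : α ≤ p := hαmin p (by omega) <| by
    rw [← Padic.norm_intCast_lt_one_iff, hnorm]
    exact Padic.norm_p_lt_one
  have hsqα : p ^ 2 ∣ α := by
    rw [pow_dvd_iff_norm_intCast_le, hnorm, ← Int.cast_natCast,
      ← pow_dvd_iff_norm_intCast_le] at hsq
    exact_mod_cast hsq
  nlinarith [Nat.le_of_dvd hα0 hsqα]

theorem not_sq_dvd_lucasSeq_of_not_dvd_discr {K : Type*} [NormedField K] [NormedAlgebra ℚ_[p] K]
    {x y : K} (hsum : x + y = a) (hprod : x * y = -b) (hb : ‖(b : ℚ_[p])‖ = 1)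
    (hndvd : ¬ (p : ℤ) ∣ a ^ 2 + 4 * b) {ρ : ℝ} (hρ : (p : ℝ)⁻¹ ≤ ρ) (hρ1 : ρ < 1)
    (hα0 : 0 < α) (hαdvd : (p : ℤ) ∣ lucasSeq a b α)
    (hαmin : ∀ m : ℕ, 0 < m → (p : ℤ) ∣ lucasSeq a b m → α ≤ m)
    {l : ℕ} (hl0 : 0 < l) (hl : ‖(y / x) ^ l - 1‖ ≤ ρ)
    (hlmin : ∀ m : ℕ, 0 < m → ‖(y / x) ^ m - 1‖ ≤ ρ → l ≤ m)
    (hlsq : ¬ ‖(y / x) ^ l - 1‖ ≤ ρ ^ 2) : ¬ (p : ℤ) ^ 2 ∣ lucasSeq a b α := fun hsq => by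
  have hxy : ‖x - y‖ = 1 := by
    rw [← sq_eq_sq₀ (norm_nonneg _) zero_le_one, one_pow,
      norm_sub_sq_eq_norm_discr (p := p) hsum hprod, norm_intCast_eq_one_of_not_dvd hndvd]
  have hnorm (n : ℕ) : ‖(y / x) ^ n - 1‖ = ‖(lucasSeq a b n : ℚ_[p])‖ := by
    rw [norm_div_pow_sub_one hsum hprod hb, hxy, one_mul]
  simp only [hnorm, ← dvd_iff_norm_intCast_le hρ hρ1] at hl hlmin
  obtain rfl : l = α := (hlmin α hα0 hαdvd).antisymm (hαmin l hl0 hl)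
  refine hlsq ?_
  rw [hnorm]
  exact (pow_dvd_iff_norm_intCast_le.1 hsq).trans (pow_le_pow_left₀ (by positivity) hρ 2)

end RankOfAppearance

theorem inv_le_norm_and_norm_lt_one_of_uniformizer {p : ℕ} [Fact p.Prime] {K : Type*}
    [NormedField K] [Algebra ℚ_[p] K] (hiso : ∀ x : ℚ_[p], ‖algebraMap ℚ_[p] K x‖ = ‖x‖) {π : K}
    (hπ : π = algebraMap ℚ_[p] K (p : ℚ_[p]) ∨ ‖π‖ = (p : ℝ) ^ (-(1 / 2 : ℝ))) :
    (p : ℝ)⁻¹ ≤ ‖π‖ ∧ ‖π‖ < 1 := by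
  have hp : (1 : ℝ) < p := mod_cast (Fact.out : p.Prime).one_lt
  rcases hπ with rfl | hπ
  · rw [hiso, Padic.norm_p]
    exact ⟨le_rfl, inv_lt_one_of_one_lt₀ hp⟩
  · rw [hπ, ← Real.rpow_neg_one]
    exact ⟨Real.rpow_le_rpow_of_exponent_le hp.le (by norm_num),
      Real.rpow_lt_one_of_one_lt_of_neg hp (by norm_num)⟩

theorem stmt_11_general {p : ℕ} [Fact p.Prime] (hp : 3 ≤ p) {a b : ℤ} (hb : (p : ℤ) ∣ b - 1)
    (hD : a ^ 2 + 4 * b ≠ 0) {K : Type*} [NormedField K] [Algebra ℚ_[p] K]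
    (hiso : ∀ x : ℚ_[p], ‖algebraMap ℚ_[p] K x‖ = ‖x‖)
    {δ : K} (hδ : δ ^ 2 = algebraMap ℚ_[p] K ((a ^ 2 + 4 * b : ℤ) : ℚ_[p]))
    {π : K} (hπ : (p : ℝ)⁻¹ ≤ ‖π‖) (hπ1 : ‖π‖ < 1) {lam₁ lam₂ : K}
    (hlam₁ : lam₁ = (algebraMap ℚ_[p] K (a : ℚ_[p]) + δ) / 2)
    (hlam₂ : lam₂ = (algebraMap ℚ_[p] K (a : ℚ_[p]) - δ) / 2)
    {α : ℕ} (hαdvd : (p : ℤ) ∣ lucasSeq a b α)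
    (hαmin : ∀ m : ℕ, 0 < m → (p : ℤ) ∣ lucasSeq a b m → α ≤ m) (hα2 : 2 < α)
    {l : ℕ} (hl0 : 0 < l) (hl : ‖(lam₂ / lam₁) ^ l - 1‖ ≤ ‖π‖)
    (hlmin : ∀ m : ℕ, 0 < m → ‖(lam₂ / lam₁) ^ m - 1‖ ≤ ‖π‖ → l ≤ m)
    (hcase : (p : ℤ) ∣ a ^ 2 + 4 * b ∨ ¬ ‖(lam₂ / lam₁) ^ l - 1‖ ≤ ‖π‖ ^ 2) :
    closure {x : ℚ_[p] | ∃ n : ℕ, 1 ≤ n ∧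
        x = (lucasSeq a b (n + α) : ℚ_[p]) / (lucasSeq a b n : ℚ_[p])} ∪
      closure {x : ℚ_[p] | ∃ n : ℕ, 1 ≤ n ∧
        x = (lucasSeq a b (n + α - 2) : ℚ_[p]) / (lucasSeq a b n : ℚ_[p])} = Set.univ := by
  let _ : NormedAlgebra ℚ_[p] K := ⟨fun r x => by rw [Algebra.smul_def, norm_mul, hiso]⟩
  have : CharZero K := charZero_of_injective_algebraMap (algebraMap ℚ_[p] K).injective
  have hb1 := norm_intCast_eq_one_of_dvd_sub_one hb
  simp only [map_intCast] at hδ hlam₁ hlam₂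
  have hsum : lam₁ + lam₂ = a := by rw [hlam₁, hlam₂]; ring
  have hprod : lam₁ * lam₂ = -b := by
    push_cast at hδ
    rw [hlam₁, hlam₂]
    linear_combination -hδ / 4
  have hndvd : ¬ (p : ℤ) ^ 2 ∣ lucasSeq a b α := by
    by_cases hdvd : (p : ℤ) ∣ a ^ 2 + 4 * b
    · exact not_sq_dvd_lucasSeq_of_dvd_discr (three_lt_of_dvd_discr hp hb hdvd) hD hb1 hdvd
        (by omega) hαmin
    · exact not_sq_dvd_lucasSeq_of_not_dvd_discr hsum hprod hb1 hdvd hπ hπ1 (by omega) hαdvd hαmin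
        hl0 hl hlmin (hcase.resolve_left hdvd)
  obtain ⟨r, rfl⟩ : ∃ r, α = r + 2 := ⟨α - 2, by omega⟩
  have hr : ¬ (p : ℤ) ∣ lucasSeq a b r := fun h => by linarith [hαmin r (by omega) h]
  exact closure_lucasQuotients_union_eq_univ hp hD hb hr hαdvd hndvd

theorem stmt_11 (p : ℕ) [Fact p.Prime] (hp : 3 ≤ p)
    (a : ℤ) (ha : a ≠ 0)
    -- `K = ℚ_p(√D)` where `D = a² + 4`: a nonarchimedean normed field extension
    -- of `ℚ_p` spanned by `1` and a square root `δ` of `D` (if `λ₁, λ₂ ∈ ℚ_p`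
    -- then `K = ℚ_p`)
    (K : Type) [NormedField K] [Algebra ℚ_[p] K]
    (hiso : ∀ x : ℚ_[p], ‖algebraMap ℚ_[p] K x‖ = ‖x‖)
    (hna : ∀ x y : K, ‖x + y‖ ≤ max ‖x‖ ‖y‖)
    (δ : K) (hδ : δ ^ 2 = algebraMap ℚ_[p] K ((a ^ 2 + 4 : ℤ) : ℚ_[p]))
    (hspan : ∀ x : K, ∃ u v : ℚ_[p], x = algebraMap ℚ_[p] K u + algebraMap ℚ_[p] K v * δ)
    -- `π = p` if `λ₁, λ₂ ∈ ℚ_p` or `ℚ_p(√D)` is unramified (norms are integer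
    -- powers of `p`); `π` is a uniformizer, `‖π‖ = p^(-1/2)`, if `ℚ_p(√D)` is ramified
    (π : K)
    (hπ : (π = algebraMap ℚ_[p] K (p : ℚ_[p]) ∧
            ∀ x : K, x ≠ 0 → ∃ m : ℤ, ‖x‖ = (p : ℝ) ^ (-m)) ∨
          ‖π‖ = (p : ℝ) ^ (-(1 / 2 : ℝ)))
    -- the characteristic roots `λ₁ = (a + √D)/2`, `λ₂ = (a - √D)/2`
    (lam₁ lam₂ : K)
    (hlam₁ : lam₁ = (algebraMap ℚ_[p] K (a : ℚ_[p]) + δ) / 2)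
    (hlam₂ : lam₂ = (algebraMap ℚ_[p] K (a : ℚ_[p]) - δ) / 2)
    -- `α` is the rank of appearance of `p` in `L(a,1)`, and `α > 2`
    (α : ℕ) (hα0 : 0 < α) (hαdvd : (p : ℤ) ∣ lucasSeq a 1 α)
    (hαmin : ∀ m : ℕ, 0 < m → (p : ℤ) ∣ lucasSeq a 1 m → α ≤ m)
    (hα2 : 2 < α)
    -- `l` is the order of `λ₂/λ₁` modulo `π`
    (l : ℕ) (hl0 : 0 < l) (hl : ‖(lam₂ / lam₁) ^ l - 1‖ ≤ ‖π‖)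
    (hlmin : ∀ m : ℕ, 0 < m → ‖(lam₂ / lam₁) ^ m - 1‖ ≤ ‖π‖ → l ≤ m)
    -- `p² ∣ D`, or `(λ₂/λ₁) ^ l - 1` is not divisible by `π²`
    (hcase : (p : ℤ) ^ 2 ∣ (a ^ 2 + 4) ∨ ¬ ‖(lam₂ / lam₁) ^ l - 1‖ ≤ ‖π‖ ^ 2) :
    closure {x : ℚ_[p] | ∃ n : ℕ, 1 ≤ n ∧
        x = (lucasSeq a 1 (n + α) : ℚ_[p]) / (lucasSeq a 1 n : ℚ_[p])} ∪
      closure {x : ℚ_[p] | ∃ n : ℕ, 1 ≤ n ∧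
        x = (lucasSeq a 1 (n + α - 2) : ℚ_[p]) / (lucasSeq a 1 n : ℚ_[p])} = Set.univ := by
  obtain ⟨hπ0, hπ1⟩ := inv_le_norm_and_norm_lt_one_of_uniformizer hiso (hπ.imp_left And.left)
  exact stmt_11_general hp (by simp) (by positivity) hiso (by simpa using hδ) hπ0 hπ1 hlam₁ hlam₂
    hαdvd hαmin hα2 hl0 hl hlmin (hcase.imp_left (dvd_pow_self (p : ℤ) two_ne_zero).trans)
end
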